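/- There exist absolute constants c, C > 0 such that the following holds. Let x be sufficiently large, let 2 ≤ a ≤ x^{1/30} and 2 ≤ z ≤ x^{1/30}, suppose a ∈ 𝓜 and P⁺(a) ≤ z, and let W_a(x,z) = #{n ≤ x : a | (n²+1) and P⁻((n²+1)/a) > z}. Then c · 2^{ω(a)}·x/(φ(a)·log z) ≤ W_a(x,z) ≤ C · 2^{ω(a)}·x/(φ(a)·log z). -/

import Mathlib

open scoped Classical

/-!
The integers `n ≤ x` with `a ∣ n ^ 2 + 1` are sifted by the primes `p ≤ z`, the event attached to
`p` being `p ∣ (n ^ 2 + 1) / a`. If `ρ(m)` is the number of square roots of `-1` modulo `m`, the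
Chinese remainder theorem and Hensel lifting give `ρ(ap) = ρ(a) (1 + χ₄(p))` for `p ∤ a` and
`ρ(ap) = ρ(a) χ₄(p)` for `p ∣ a`. Counting `n` in residue classes, the events are therefore nearly
independent, of probabilities `(1 + χ₄(p)) / p`, respectively `χ₄(p) / p`, with an error
`O(ρ(a) 2 ^ k)` for `k` simultaneous events.

The Brun–Hooley sieve splits the primes into the blocks `(√u, u]` with `u = z, z ^ (1/2), …`, down
to a bounded block, and bounds `∏ (1 - 1_p)` on each block by truncated inclusion–exclusion. Since
`∑ 1 / p` is bounded on each block, levels growing linearly with the index of the block lose only a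
constant factor, while the products of the sieve weights involve at most `O(z ^ 27)` squarefree
divisors. Upper bounds on the blocks multiply to an upper bound; Hooley's inequality
`∏ xⱼ ≥ ∏ yⱼ - ∑ₗ (yₗ - xₗ) ∏_{j ≠ l} yⱼ` for `0 ≤ xⱼ ≤ yⱼ` turns them into a lower bound as well.

The main term is `x (ρ(a) / a) ∏_{p ≤ z} (1 - g(p))`. Mertens' theorem for `∑ (1 + χ₄(p)) / p`, in
which the character sum stays bounded because `L(1, χ₄) ≠ 0`, shows that the product is of order
`(a / φ(a)) / log z`; and `ρ(a)` is `2 ^ ω(a)` up to a factor `2` coming from the prime `2`.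
-/

section SieveSum

open Finset

variable {ι : Type*}

/-- The sum of `c D * ∏ p ∈ D, g p` over the subsets `D` of `T`: a truncated inclusion–exclusion
sum, `D` playing the role of a squarefree divisor and `c` that of the sieve weights. -/
noncomputable def sieveSum (T : Finset ι) (c : Finset ι → ℝ) (g : ι → ℝ) : ℝ :=
  ∑ D ∈ T.powerset, c D * ∏ p ∈ D, g p

/-- The weight selecting the sets with exactly `k` elements: `sieveSum T (exactWeight k) g` is the
`k`-th elementary symmetric function of `g` on `T`. -/
def exactWeight (k : ℕ) (D : Finset ι) : ℝ := if #D = k then 1 else 0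

/-- Brun's pure sieve weight: the Möbius sign, truncated to the sets with at most `k` elements. -/
def brunWeight (k : ℕ) (D : Finset ι) : ℝ := if #D ≤ k then (-1) ^ #D else 0

theorem exactWeight_nonneg (k : ℕ) (D : Finset ι) : 0 ≤ exactWeight k D := by
  unfold exactWeight; positivity

theorem abs_exactWeight_le (k : ℕ) (D : Finset ι) :
    |exactWeight k D| ≤ if #D ≤ k then 1 else 0 := by
  unfold exactWeight; split_ifs <;> grind

theorem abs_brunWeight_le (k : ℕ) (D : Finset ι) : |brunWeight k D| ≤ if #D ≤ k then 1 else 0 := by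
  unfold brunWeight; split_ifs <;> simp

@[simp]
theorem sieveSum_empty (c : Finset ι → ℝ) (g : ι → ℝ) : sieveSum ∅ c g = c ∅ := by simp [sieveSum]

theorem sieveSum_congr {T : Finset ι} {c d : Finset ι → ℝ} (h : ∀ D ⊆ T, c D = d D) (g : ι → ℝ) :
    sieveSum T c g = sieveSum T d g :=
  sum_congr rfl fun D hD ↦ by rw [h D (mem_powerset.1 hD)]

theorem sieveSum_nonneg {T : Finset ι} {c : Finset ι → ℝ} {g : ι → ℝ} (hc : ∀ D, 0 ≤ c D)
    (hg : ∀ p ∈ T, 0 ≤ g p) : 0 ≤ sieveSum T c g :=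
  sum_nonneg fun D hD ↦ mul_nonneg (hc D) (prod_nonneg fun p hp ↦ hg p (mem_powerset.1 hD hp))

theorem sieveSum_insert [DecidableEq ι] {T : Finset ι} {p : ι} (hp : p ∉ T) (c : Finset ι → ℝ)
    (g : ι → ℝ) :
    sieveSum (insert p T) c g = sieveSum T c g + g p * sieveSum T (fun D ↦ c (insert p D)) g := by
  simp only [sieveSum]
  rw [sum_powerset_insert hp, mul_sum]
  refine congrArg _ (sum_congr rfl fun D hD ↦ ?_)
  rw [prod_insert fun h ↦ hp (mem_powerset.1 hD h)]
  ring

@[simp]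
theorem sieveSum_exactWeight_zero (T : Finset ι) (g : ι → ℝ) :
    sieveSum T (exactWeight 0) g = 1 := by
  simp [sieveSum, exactWeight]

@[simp]
theorem sieveSum_brunWeight_zero (T : Finset ι) (g : ι → ℝ) : sieveSum T (brunWeight 0) g = 1 := by
  rw [sieveSum_congr (d := exactWeight 0) (fun D _ ↦ by
    simp +contextual [brunWeight, exactWeight]), sieveSum_exactWeight_zero]

theorem sieveSum_exactWeight_insert [DecidableEq ι] {T : Finset ι} {p : ι} (hp : p ∉ T) (k : ℕ)
    (g : ι → ℝ) :
    sieveSum (insert p T) (exactWeight (k + 1)) g =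
      sieveSum T (exactWeight (k + 1)) g + g p * sieveSum T (exactWeight k) g := by
  rw [sieveSum_insert hp]
  congr 2
  exact sieveSum_congr (fun D hD ↦ by simp [exactWeight, card_insert_of_notMem fun h ↦ hp (hD h)]) g

theorem sieveSum_brunWeight_insert [DecidableEq ι] {T : Finset ι} {p : ι} (hp : p ∉ T) (k : ℕ)
    (g : ι → ℝ) :
    sieveSum (insert p T) (brunWeight (k + 1)) g =
      sieveSum T (brunWeight (k + 1)) g - g p * sieveSum T (brunWeight k) g := by
  have hneg : sieveSum T (fun D ↦ brunWeight (k + 1) (insert p D)) g =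
      -sieveSum T (brunWeight k) g := by
    rw [sieveSum_congr (d := fun D ↦ -brunWeight k D) (fun D hD ↦ by
      simp [brunWeight, card_insert_of_notMem fun h ↦ hp (hD h), pow_succ, neg_ite])]
    simp [sieveSum]
  rw [sieveSum_insert hp, hneg]
  ring

theorem sieveSum_exactWeight_eq_zero {T : Finset ι} {k : ℕ} (h : #T < k) (g : ι → ℝ) :
    sieveSum T (exactWeight k) g = 0 :=
  sum_eq_zero fun D hD ↦ by
    simp [exactWeight, ((card_le_card (mem_powerset.1 hD)).trans_lt h).ne]

theorem bonferroni {T : Finset ι} {g : ι → ℝ} (hg : ∀ p ∈ T, g p ∈ Set.Icc 0 1) (k : ℕ) :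
    (-1) ^ k * (sieveSum T (brunWeight k) g - ∏ p ∈ T, (1 - g p)) ∈
      Set.Icc 0 (sieveSum T (exactWeight (k + 1)) g) := by
  induction T using Finset.induction_on generalizing k with
  | empty => simp [brunWeight, exactWeight]
  | insert p T hp ih =>
    have hgp := hg p (mem_insert_self _ _)
    replace ih := ih fun q hq ↦ hg q (mem_insert_of_mem hq)
    rw [prod_insert hp, sieveSum_exactWeight_insert hp]
    set V := ∏ q ∈ T, (1 - g q)
    cases k with
    | zero =>
      have hV : V ≤ 1 := by simpa using (ih 0).1
      have hE : 1 - V ≤ sieveSum T (exactWeight 1) g := by simpa using (ih 0).2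
      have hV0 : 0 ≤ V := prod_nonneg fun q hq ↦ sub_nonneg.2 (hg q (mem_insert_of_mem hq)).2
      simp only [pow_zero, one_mul, sieveSum_brunWeight_zero, sieveSum_exactWeight_zero, zero_add,
        mul_one]
      exact ⟨by nlinarith [hgp.1], by nlinarith [hgp.1]⟩
    | succ k =>
      have hsplit : (-1) ^ (k + 1) *
          (sieveSum T (brunWeight (k + 1)) g - g p * sieveSum T (brunWeight k) g - (1 - g p) * V) =
          (-1) ^ (k + 1) * (sieveSum T (brunWeight (k + 1)) g - V) +
            g p * ((-1) ^ k * (sieveSum T (brunWeight k) g - V)) := by ring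
      rw [sieveSum_brunWeight_insert hp, hsplit]
      exact ⟨add_nonneg (ih _).1 (mul_nonneg hgp.1 (ih _).1),
        add_le_add (ih _).2 (mul_le_mul_of_nonneg_left (ih _).2 hgp.1)⟩

theorem prod_one_sub_le_sieveSum {T : Finset ι} {g : ι → ℝ} (hg : ∀ p ∈ T, g p ∈ Set.Icc 0 1)
    {k : ℕ} (hk : Even k) : ∏ p ∈ T, (1 - g p) ≤ sieveSum T (brunWeight k) g := by
  simpa [hk.neg_one_pow] using (bonferroni hg k).1

theorem sieveSum_le_prod_one_sub_add {T : Finset ι} {g : ι → ℝ} (hg : ∀ p ∈ T, g p ∈ Set.Icc 0 1)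
    {k : ℕ} (hk : Even k) :
    sieveSum T (brunWeight k) g ≤ ∏ p ∈ T, (1 - g p) + sieveSum T (exactWeight (k + 1)) g := by
  simpa [hk.neg_one_pow, sub_le_iff_le_add, add_comm] using (bonferroni hg k).2

theorem sieveSum_exactWeight_le {T : Finset ι} {g : ι → ℝ} (hg : ∀ p ∈ T, 0 ≤ g p) (k : ℕ) :
    sieveSum T (exactWeight k) g ≤ (∑ p ∈ T, g p) ^ k / k.factorial := by
  induction T using Finset.induction_on generalizing k with
  | empty => cases k <;> simp [exactWeight]
  | insert p T hp ih =>
    have hgp := hg p (mem_insert_self _ _)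
    have hgT : ∀ q ∈ T, 0 ≤ g q := fun q hq ↦ hg q (mem_insert_of_mem hq)
    cases k with
    | zero => simp
    | succ k =>
      rw [sieveSum_exactWeight_insert hp, sum_insert hp, add_comm (g p)]
      set s := ∑ q ∈ T, g q
      have hs : 0 ≤ s := sum_nonneg hgT
      calc sieveSum T (exactWeight (k + 1)) g + g p * sieveSum T (exactWeight k) g
          ≤ s ^ (k + 1) / (k + 1).factorial + g p * (s ^ k / k.factorial) :=
            add_le_add (ih hgT _) (mul_le_mul_of_nonneg_left (ih hgT k) hgp)
        _ = (s ^ (k + 1) + (k + 1 : ℕ) * s ^ k * g p) / (k + 1).factorial := by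
            rw [Nat.factorial_succ]; push_cast; field_simp
        _ ≤ (s + g p) ^ (k + 1) / (k + 1).factorial := by
            gcongr
            exact pow_add_mul_le_add_pow hs (by linarith) (k + 1)

theorem sieveSum_abs_const_le (T : Finset ι) {c : Finset ι → ℝ} {k : ℕ}
    (hc : ∀ D, |c D| ≤ if #D ≤ k then 1 else 0) {κ : ℝ} (hκ : 0 ≤ κ) :
    sieveSum T (fun D ↦ |c D|) (fun _ ↦ κ) ≤ (1 + κ * #T) ^ k := by
  have hsum (D : Finset ι) : |c D| ≤ ∑ m ∈ range (k + 1), exactWeight m D := by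
    simpa [exactWeight, Nat.lt_succ_iff] using hc D
  calc sieveSum T (fun D ↦ |c D|) (fun _ ↦ κ)
      ≤ sieveSum T (fun D ↦ ∑ m ∈ range (k + 1), exactWeight m D) (fun _ ↦ κ) :=
        sum_le_sum fun D _ ↦ mul_le_mul_of_nonneg_right (hsum D) (by positivity)
    _ = ∑ m ∈ range (k + 1), sieveSum T (exactWeight m) (fun _ ↦ κ) := by
        simp only [sieveSum, sum_mul]; exact sum_comm
    _ ≤ ∑ m ∈ range (k + 1), (κ * #T) ^ m * 1 ^ (k - m) * (k.choose m) := by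
        refine sum_le_sum fun m hm ↦ (sieveSum_exactWeight_le (fun _ _ ↦ hκ) m).trans ?_
        have hchoose : (1 : ℝ) ≤ k.choose m := by
          exact_mod_cast Nat.choose_pos (Nat.lt_succ_iff.1 (mem_range.1 hm))
        have hfact : (1 : ℝ) ≤ m.factorial := by exact_mod_cast Nat.factorial_pos m
        rw [sum_const, nsmul_eq_mul, mul_comm _ κ, one_pow, mul_one]
        exact (div_le_self (by positivity) hfact).trans
          (le_mul_of_one_le_right (by positivity) hchoose)
    _ = (1 + κ * #T) ^ k := by rw [add_comm (1 : ℝ), add_pow]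

theorem sum_powerset_union {M : Type*} [AddCommMonoid M] [DecidableEq ι] {A B : Finset ι}
    (h : Disjoint A B) (f : Finset ι → M) :
    ∑ D ∈ (A ∪ B).powerset, f D = ∑ D ∈ A.powerset, ∑ D' ∈ B.powerset, f (D ∪ D') := by
  induction A using Finset.induction_on generalizing f with
  | empty => simp
  | insert a A ha ih =>
    obtain ⟨haB, hAB⟩ := disjoint_insert_left.1 h
    rw [insert_union, sum_powerset_insert (by simp [ha, haB]), sum_powerset_insert ha, ih hAB,
      ih hAB]
    simp only [insert_union]

theorem prod_sieveSum {J : Type*} [DecidableEq ι] (s : Finset J) {T : J → Finset ι}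
    (hT : (s : Set J).PairwiseDisjoint T) (c : J → Finset ι → ℝ) (g : ι → ℝ) :
    ∏ j ∈ s, sieveSum (T j) (c j) g =
      sieveSum (s.biUnion T) (fun D ↦ ∏ j ∈ s, c j (D ∩ T j)) g := by
  induction s using Finset.induction_on with
  | empty => simp
  | insert i s hi ih =>
    have hdisj : Disjoint (T i) (s.biUnion T) := (disjoint_biUnion_right _ _ _).2 fun j hj ↦
      hT (by simp) (by simp [hj]) fun hij ↦ hi (hij ▸ hj)
    rw [prod_insert hi, ih (hT.subset (by simp)), biUnion_insert]
    simp only [sieveSum]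
    rw [sum_powerset_union hdisj, sum_mul_sum]
    refine sum_congr rfl fun D hD ↦ sum_congr rfl fun D' hD' ↦ ?_
    rw [mem_powerset] at hD hD'
    have hi' : (D ∪ D') ∩ T i = D := by
      rw [union_inter_distrib_right, inter_eq_left.2 hD,
        disjoint_iff_inter_eq_empty.1 (hdisj.symm.mono_left hD'), union_empty]
    have hj' : ∀ j ∈ s, (D ∪ D') ∩ T j = D' ∩ T j := fun j hj ↦ by
      rw [union_inter_distrib_right, disjoint_iff_inter_eq_empty.1
        (hdisj.mono hD (subset_biUnion_of_mem T hj)), empty_union]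
    rw [prod_insert hi, hi', prod_congr rfl fun j hj ↦ congrArg (c j) (hj' j hj),
      prod_union (hdisj.mono hD hD')]
    ring

end SieveSum

section BrunHooley

open Finset

variable {α ι J : Type*} {N : Finset α} {b : α → ι → ℝ} {g : ι → ℝ} {X R κ : ℝ}

/-- A sieve problem: `b n p` is the indicator (or a weight) of the event that the element `n` of `N`
is sifted by `p ∈ U`. The events behave like independent ones of probability `g p` on a space of
total mass `X`, up to an error `R * κ ^ #D` for the intersection over `p ∈ D`. -/
structure HasSieveDensity (N : Finset α) (b : α → ι → ℝ) (U : Finset ι) (g : ι → ℝ)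
    (X R κ : ℝ) : Prop where
  mass_nonneg : 0 ≤ X
  base_nonneg : 0 ≤ κ
  indicator_mem : ∀ n ∈ N, ∀ p ∈ U, b n p ∈ Set.Icc 0 1
  density_mem : ∀ p ∈ U, g p ∈ Set.Ico 0 1
  abs_sum_sub_le : ∀ D ⊆ U, |∑ n ∈ N, ∏ p ∈ D, b n p - X * ∏ p ∈ D, g p| ≤ R * κ ^ #D

theorem HasSieveDensity.error_nonneg {U : Finset ι} (h : HasSieveDensity N b U g X R κ) :
    0 ≤ R := by
  simpa using (abs_nonneg _).trans (h.abs_sum_sub_le ∅ (empty_subset U))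

theorem HasSieveDensity.abs_sum_sieveSum_sub_le {U : Finset ι} (h : HasSieveDensity N b U g X R κ)
    (c : Finset ι → ℝ) :
    |∑ n ∈ N, sieveSum U c (b n) - X * sieveSum U c g| ≤
      R * sieveSum U (fun D ↦ |c D|) (fun _ ↦ κ) := by
  have hlin : ∑ n ∈ N, sieveSum U c (b n) - X * sieveSum U c g =
      ∑ D ∈ U.powerset, c D * (∑ n ∈ N, ∏ p ∈ D, b n p - X * ∏ p ∈ D, g p) := by
    simp only [sieveSum, mul_sub, sum_sub_distrib, mul_sum]
    rw [sum_comm]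
    exact congrArg _ (sum_congr rfl fun D _ ↦ by ring)
  rw [hlin, sieveSum, mul_sum]
  refine (abs_sum_le_sum_abs _ _).trans (sum_le_sum fun D hD ↦ ?_)
  rw [abs_mul, prod_const]
  calc |c D| * |∑ n ∈ N, ∏ p ∈ D, b n p - X * ∏ p ∈ D, g p|
      ≤ |c D| * (R * κ ^ #D) :=
        mul_le_mul_of_nonneg_left (h.abs_sum_sub_le D (mem_powerset.1 hD)) (abs_nonneg _)
    _ = R * (|c D| * κ ^ #D) := by ring

theorem HasSieveDensity.abs_sum_prod_sieveSum_sub_le [DecidableEq ι] {s : Finset J}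
    {T : J → Finset ι} (h : HasSieveDensity N b (s.biUnion T) g X R κ)
    (hT : (s : Set J).PairwiseDisjoint T) {c : J → Finset ι → ℝ} {m : J → ℕ}
    (hc : ∀ j D, |c j D| ≤ if #D ≤ m j then 1 else 0) :
    |∑ n ∈ N, ∏ j ∈ s, sieveSum (T j) (c j) (b n) - X * ∏ j ∈ s, sieveSum (T j) (c j) g| ≤
      R * ∏ j ∈ s, (1 + κ * #(T j)) ^ m j := by
  simp only [prod_sieveSum s hT c]
  refine (h.abs_sum_sieveSum_sub_le _).trans (mul_le_mul_of_nonneg_left ?_ h.error_nonneg)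
  simp only [abs_prod]
  rw [← prod_sieveSum s hT fun j D ↦ |c j D|]
  exact prod_le_prod (fun j _ ↦ sieveSum_nonneg (fun _ ↦ abs_nonneg _) fun _ _ ↦ h.base_nonneg)
    fun j _ ↦ sieveSum_abs_const_le _ (hc j) h.base_nonneg

theorem prod_sub_sum_mul_prod_erase_le [DecidableEq J] {x y e : J → ℝ} {s : Finset J}
    (hx : ∀ j ∈ s, 0 ≤ x j) (hxy : ∀ j ∈ s, x j ≤ y j) (hyx : ∀ j ∈ s, y j ≤ x j + e j) :
    ∏ j ∈ s, y j - ∑ l ∈ s, e l * ∏ j ∈ s.erase l, y j ≤ ∏ j ∈ s, x j := by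
  induction s using Finset.induction_on with
  | empty => simp
  | insert i s hi ih =>
    rw [forall_mem_insert] at hx hxy hyx
    have herase : ∑ l ∈ s, e l * ∏ j ∈ (insert i s).erase l, y j =
        y i * ∑ l ∈ s, e l * ∏ j ∈ s.erase l, y j := by
      rw [mul_sum]
      refine sum_congr rfl fun l hl ↦ ?_
      rw [erase_insert_of_ne (ne_of_mem_of_not_mem hl hi).symm,
        prod_insert fun h ↦ hi (mem_of_mem_erase h)]
      ring
    rw [prod_insert hi, prod_insert hi, sum_insert hi, erase_insert hi, herase]
    have hprod : ∏ j ∈ s, x j ≤ ∏ j ∈ s, y j := prod_le_prod hx.2 hxy.2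
    have hy : 0 ≤ y i := hx.1.trans hxy.1
    have he : 0 ≤ e i := by linarith [hxy.1, hyx.1]
    have hih := mul_le_mul_of_nonneg_left (ih hx.2 hxy.2 hyx.2) hy
    have hle := mul_le_mul_of_nonneg_right hyx.1 (prod_nonneg hx.2)
    nlinarith [mul_le_mul_of_nonneg_left hprod he]

theorem prod_sieveSum_update [DecidableEq J] {s : Finset J} {l : J} (hl : l ∈ s) (T : J → Finset ι)
    (c : J → Finset ι → ℝ) (d : Finset ι → ℝ) (f : ι → ℝ) :
    ∏ j ∈ s, sieveSum (T j) (Function.update c l d j) f =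
      sieveSum (T l) d f * ∏ j ∈ s.erase l, sieveSum (T j) (c j) f := by
  rw [← mul_prod_erase s _ hl, Function.update_self]
  refine congrArg _ (prod_congr rfl fun j hj ↦ ?_)
  rw [Function.update_of_ne (ne_of_mem_erase hj)]

/-- The relative loss of the Brun–Hooley sieve with blocks `T j`, `j ∈ s`, and levels `k j`. -/
noncomputable def brunHooleyLoss (s : Finset J) (T : J → Finset ι) (k : J → ℕ) (g : ι → ℝ) : ℝ :=
  ∑ j ∈ s, sieveSum (T j) (exactWeight (k j + 1)) g / ∏ p ∈ T j, (1 - g p)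

variable {s : Finset J} {T : J → Finset ι} {k : J → ℕ}

theorem prod_sieveSum_brunWeight_le [DecidableEq ι] (hg : ∀ p ∈ s.biUnion T, g p ∈ Set.Ico 0 1)
    (hT : (s : Set J).PairwiseDisjoint T) (hk : ∀ j, Even (k j)) :
    ∏ j ∈ s, sieveSum (T j) (brunWeight (k j)) g ≤
      (∏ p ∈ s.biUnion T, (1 - g p)) * Real.exp (brunHooleyLoss s T k g) := by
  have hgT : ∀ j ∈ s, ∀ p ∈ T j, g p ∈ Set.Ico 0 1 := fun j hj p hp ↦
    hg p (mem_biUnion.2 ⟨j, hj, hp⟩)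
  have hV : ∀ j ∈ s, 0 < ∏ p ∈ T j, (1 - g p) := fun j hj ↦
    prod_pos fun p hp ↦ sub_pos.2 (hgT j hj p hp).2
  rw [brunHooleyLoss, Real.exp_sum, prod_biUnion hT, ← prod_mul_distrib]
  refine prod_le_prod (fun j hj ↦ ?_) fun j hj ↦ ?_
  all_goals have hIcc := fun p hp ↦ Set.Ico_subset_Icc_self (hgT j hj p hp)
  · exact (hV j hj).le.trans (prod_one_sub_le_sieveSum hIcc (hk j))
  · calc sieveSum (T j) (brunWeight (k j)) g
        ≤ ∏ p ∈ T j, (1 - g p) + sieveSum (T j) (exactWeight (k j + 1)) g :=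
          sieveSum_le_prod_one_sub_add hIcc (hk j)
      _ = (∏ p ∈ T j, (1 - g p)) *
          (sieveSum (T j) (exactWeight (k j + 1)) g / (∏ p ∈ T j, (1 - g p)) + 1) := by
          rw [mul_add, mul_div_cancel₀ _ (hV j hj).ne', mul_one, add_comm]
      _ ≤ _ := mul_le_mul_of_nonneg_left (Real.add_one_le_exp _) (hV j hj).le

theorem HasSieveDensity.brunHooley_upper [DecidableEq ι]
    (h : HasSieveDensity N b (s.biUnion T) g X R κ)
    (hT : (s : Set J).PairwiseDisjoint T) (hk : ∀ j, Even (k j)) :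
    ∑ n ∈ N, ∏ p ∈ s.biUnion T, (1 - b n p) ≤
      X * (∏ p ∈ s.biUnion T, (1 - g p)) * Real.exp (brunHooleyLoss s T k g) +
        R * ∏ j ∈ s, (1 + κ * #(T j)) ^ k j := by
  have hpoint : ∀ n ∈ N, ∏ p ∈ s.biUnion T, (1 - b n p) ≤
      ∏ j ∈ s, sieveSum (T j) (brunWeight (k j)) (b n) := fun n hn ↦ by
    have hb : ∀ j ∈ s, ∀ p ∈ T j, b n p ∈ Set.Icc 0 1 := fun j hj p hp ↦
      h.indicator_mem n hn p (mem_biUnion.2 ⟨j, hj, hp⟩)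
    rw [prod_biUnion hT]
    exact prod_le_prod (fun j hj ↦ prod_nonneg fun p hp ↦ sub_nonneg.2 (hb j hj p hp).2)
      fun j hj ↦ prod_one_sub_le_sieveSum (hb j hj) (hk j)
  have hmain := mul_le_mul_of_nonneg_left (prod_sieveSum_brunWeight_le h.density_mem hT hk)
    h.mass_nonneg
  have herr := (abs_le.1 (h.abs_sum_prod_sieveSum_sub_le hT
    (c := fun j ↦ brunWeight (k j)) fun j ↦ abs_brunWeight_le (k j))).2
  linarith [sum_le_sum hpoint]

theorem prod_mul_one_sub_brunHooleyLoss_le [DecidableEq ι] [DecidableEq J]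
    (hg : ∀ p ∈ s.biUnion T, g p ∈ Set.Ico 0 1)
    (hT : (s : Set J).PairwiseDisjoint T) (hk : ∀ j, Even (k j))
    (hloss : brunHooleyLoss s T k g ≤ 1) :
    (∏ p ∈ s.biUnion T, (1 - g p)) * (1 - brunHooleyLoss s T k g) ≤
      ∏ j ∈ s, sieveSum (T j) (brunWeight (k j)) g - ∑ l ∈ s,
        sieveSum (T l) (exactWeight (k l + 1)) g *
          ∏ j ∈ s.erase l, sieveSum (T j) (brunWeight (k j)) g := by
  have hgT : ∀ j ∈ s, ∀ p ∈ T j, g p ∈ Set.Ico 0 1 := fun j hj p hp ↦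
    hg p (mem_biUnion.2 ⟨j, hj, hp⟩)
  have hV : ∀ j ∈ s, 0 < ∏ p ∈ T j, (1 - g p) := fun j hj ↦
    prod_pos fun p hp ↦ sub_pos.2 (hgT j hj p hp).2
  have hVY : ∀ j ∈ s, ∏ p ∈ T j, (1 - g p) ≤ sieveSum (T j) (brunWeight (k j)) g := fun j hj ↦
    prod_one_sub_le_sieveSum (fun p hp ↦ Set.Ico_subset_Icc_self (hgT j hj p hp)) (hk j)
  have hloss_mul : ∑ l ∈ s, sieveSum (T l) (exactWeight (k l + 1)) g *
      ∏ j ∈ s.erase l, sieveSum (T j) (brunWeight (k j)) g ≤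
      brunHooleyLoss s T k g * ∏ j ∈ s, sieveSum (T j) (brunWeight (k j)) g := by
    rw [brunHooleyLoss, sum_mul]
    refine sum_le_sum fun l hl ↦ ?_
    have hE : 0 ≤ sieveSum (T l) (exactWeight (k l + 1)) g :=
      sieveSum_nonneg (exactWeight_nonneg _) fun p hp ↦ (hgT l hl p hp).1
    rw [← mul_prod_erase s _ hl, ← mul_assoc]
    refine mul_le_mul_of_nonneg_right ?_ (prod_nonneg fun j hj ↦
      (hV j (mem_of_mem_erase hj)).le.trans (hVY j (mem_of_mem_erase hj)))
    rw [div_mul_eq_mul_div, le_div_iff₀ (hV l hl)]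
    exact mul_le_mul_of_nonneg_left (hVY l hl) hE
  have hprod : ∏ p ∈ s.biUnion T, (1 - g p) ≤ ∏ j ∈ s, sieveSum (T j) (brunWeight (k j)) g := by
    rw [prod_biUnion hT]
    exact prod_le_prod (fun j hj ↦ (hV j hj).le) hVY
  linarith [mul_le_mul_of_nonneg_right hprod (sub_nonneg.2 hloss)]

theorem prod_sieveSum_sub_sum_le [DecidableEq ι] {f : ι → ℝ}
    (hf : ∀ p ∈ s.biUnion T, f p ∈ Set.Icc 0 1) (hT : (s : Set J).PairwiseDisjoint T)
    (hk : ∀ j, Even (k j)) :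
    ∏ j ∈ s, sieveSum (T j) (brunWeight (k j)) f -
        ∑ l ∈ s, sieveSum (T l) (exactWeight (k l + 1)) f *
          ∏ j ∈ s.erase l, sieveSum (T j) (brunWeight (k j)) f ≤
      ∏ p ∈ s.biUnion T, (1 - f p) := by
  have hfT : ∀ j ∈ s, ∀ p ∈ T j, f p ∈ Set.Icc 0 1 := fun j hj p hp ↦
    hf p (mem_biUnion.2 ⟨j, hj, hp⟩)
  rw [prod_biUnion hT]
  exact prod_sub_sum_mul_prod_erase_le
    (fun j hj ↦ prod_nonneg fun p hp ↦ sub_nonneg.2 (hfT j hj p hp).2)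
    (fun j hj ↦ prod_one_sub_le_sieveSum (hfT j hj) (hk j))
    fun j hj ↦ sieveSum_le_prod_one_sub_add (hfT j hj) (hk j)

theorem HasSieveDensity.brunHooley_lower [DecidableEq ι]
    (h : HasSieveDensity N b (s.biUnion T) g X R κ)
    (hT : (s : Set J).PairwiseDisjoint T) (hk : ∀ j, Even (k j))
    (hloss : brunHooleyLoss s T k g ≤ 1) :
    X * (∏ p ∈ s.biUnion T, (1 - g p)) * (1 - brunHooleyLoss s T k g) -
        R * ((#s + 1) * ∏ j ∈ s, (1 + κ * #(T j)) ^ (k j + 1)) ≤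
      ∑ n ∈ N, ∏ p ∈ s.biUnion T, (1 - b n p) := by
  set Y : (ι → ℝ) → J → ℝ := fun f j ↦ sieveSum (T j) (brunWeight (k j)) f
  set E : (ι → ℝ) → J → ℝ := fun f j ↦ sieveSum (T j) (exactWeight (k j + 1)) f
  set P : ℝ := ∏ j ∈ s, (1 + κ * #(T j)) ^ (k j + 1)
  have hbrun (j : J) (D : Finset ι) : |brunWeight (k j) D| ≤ if #D ≤ k j + 1 then 1 else 0 :=
    (abs_brunWeight_le (k j) D).trans (by split_ifs <;> first | omega | norm_num)
  have hY : X * ∏ j ∈ s, Y g j - R * P ≤ ∑ n ∈ N, ∏ j ∈ s, Y (b n) j := by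
    linarith [(abs_le.1 (h.abs_sum_prod_sieveSum_sub_le hT hbrun)).1]
  have hE : ∀ l ∈ s, ∑ n ∈ N, E (b n) l * ∏ j ∈ s.erase l, Y (b n) j ≤
      X * (E g l * ∏ j ∈ s.erase l, Y g j) + R * P := fun l hl ↦ by
    have := (abs_le.1 (h.abs_sum_prod_sieveSum_sub_le hT (m := fun j ↦ k j + 1)
      (c := Function.update (fun j ↦ brunWeight (k j)) l (exactWeight (k l + 1))) fun j ↦ by
        obtain rfl | hj := eq_or_ne j l
        · simpa using abs_exactWeight_le (k j + 1)
        · simpa [hj] using hbrun j)).2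
    simp only [prod_sieveSum_update hl] at this
    linarith
  have hpoint : ∀ n ∈ N, ∏ j ∈ s, Y (b n) j - ∑ l ∈ s, E (b n) l * ∏ j ∈ s.erase l, Y (b n) j ≤
      ∏ p ∈ s.biUnion T, (1 - b n p) := fun n hn ↦
    prod_sieveSum_sub_sum_le (h.indicator_mem n hn) hT hk
  have hmain := mul_le_mul_of_nonneg_left
    (prod_mul_one_sub_brunHooleyLoss_le h.density_mem hT hk hloss) h.mass_nonneg
  calc _ ≤ (X * ∏ j ∈ s, Y g j - R * P) -
        ∑ l ∈ s, (X * (E g l * ∏ j ∈ s.erase l, Y g j) + R * P) := by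
        rw [sum_add_distrib, ← mul_sum, sum_const, nsmul_eq_mul]
        linarith
    _ ≤ ∑ n ∈ N, ∏ j ∈ s, Y (b n) j -
        ∑ l ∈ s, ∑ n ∈ N, E (b n) l * ∏ j ∈ s.erase l, Y (b n) j :=
        sub_le_sub hY (sum_le_sum hE)
    _ ≤ _ := by
        rw [sum_comm, ← sum_sub_distrib]
        exact sum_le_sum hpoint

theorem exp_half_le_two : Real.exp (1 / 2) ≤ 2 := by
  rw [← Real.le_log_iff_exp_le two_pos]
  linarith [Real.log_two_gt_d9]

theorem HasSieveDensity.sum_prod_one_sub_mem_Icc [DecidableEq ι] {E : ℝ}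
    (h : HasSieveDensity N b (s.biUnion T) g X R κ) (hT : (s : Set J).PairwiseDisjoint T)
    (hk : ∀ j, Even (k j)) (hloss : brunHooleyLoss s T k g ≤ 1 / 2)
    (hE : (#s + 1) * ∏ j ∈ s, (1 + κ * #(T j)) ^ (k j + 1) ≤ E) :
    ∑ n ∈ N, ∏ p ∈ s.biUnion T, (1 - b n p) ∈
      Set.Icc (X * (∏ p ∈ s.biUnion T, (1 - g p)) / 2 - R * E)
        (2 * (X * ∏ p ∈ s.biUnion T, (1 - g p)) + R * E) := by
  have hκ := h.base_nonneg
  have hR := h.error_nonneg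
  have hXV : 0 ≤ X * ∏ p ∈ s.biUnion T, (1 - g p) :=
    mul_nonneg h.mass_nonneg (prod_nonneg fun p hp ↦ sub_nonneg.2 (h.density_mem p hp).2.le)
  constructor
  · have hlower := h.brunHooley_lower hT hk (by linarith)
    have hmain := mul_le_mul_of_nonneg_left hloss hXV
    linarith [mul_le_mul_of_nonneg_left hE hR]
  · have hupper := h.brunHooley_upper hT hk
    have hmain := mul_le_mul_of_nonneg_left
      ((Real.exp_le_exp.2 hloss).trans exp_half_le_two) hXV
    have hlevel : ∏ j ∈ s, (1 + κ * #(T j)) ^ k j ≤ E := by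
      refine le_trans ?_ hE
      calc ∏ j ∈ s, (1 + κ * #(T j)) ^ k j ≤ ∏ j ∈ s, (1 + κ * #(T j)) ^ (k j + 1) :=
            prod_le_prod (fun j _ ↦ by positivity) fun j _ ↦
              pow_le_pow_right₀ (le_add_of_nonneg_right (by positivity)) (k j).le_succ
        _ ≤ _ := le_mul_of_one_le_left (prod_nonneg fun j _ ↦ by positivity)
            (le_add_of_nonneg_left (by positivity))
    linarith [mul_le_mul_of_nonneg_left hlevel hR]

end BrunHooley

section Mertens

open Finset
open scoped ArithmeticFunction.vonMangoldt

variable {c f w : ℕ → ℝ} {B C δ : ℝ}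

theorem abs_sum_mul_le_of_antitoneOn {m : ℕ} (hf0 : ∀ n ≥ m, 0 ≤ f n)
    (hf : AntitoneOn f (Set.Ici m)) (hc : ∀ k ≥ m, |∑ i ∈ Ico m k, c i| ≤ B) (k : ℕ) :
    |∑ i ∈ Ico m k, c i * f i| ≤ B * f m := by
  have hB : 0 ≤ B := by simpa using hc m le_rfl
  obtain hkm | hmk := lt_or_ge k m
  · simpa [Ico_eq_empty_of_le hkm.le] using mul_nonneg hB (hf0 m le_rfl)
  have sub_boundary :
      |∑ i ∈ Ico m k, c i * f i - (∑ i ∈ Ico m k, c i) * f k| ≤ B * (f m - f k) := by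
    induction k, hmk using Nat.le_induction with
    | base => simp
    | succ k hk ih =>
      have hstep : 0 ≤ f k - f (k + 1) :=
        sub_nonneg.2 (hf hk (Set.mem_Ici.2 (by omega)) k.le_succ)
      calc |∑ i ∈ Ico m (k + 1), c i * f i - (∑ i ∈ Ico m (k + 1), c i) * f (k + 1)|
          = |(∑ i ∈ Ico m k, c i * f i - (∑ i ∈ Ico m k, c i) * f k)
              + (∑ i ∈ Ico m (k + 1), c i) * (f k - f (k + 1))| := by
            rw [sum_Ico_succ_top hk, sum_Ico_succ_top hk]; ring_nf
        _ ≤ B * (f m - f k) + B * (f k - f (k + 1)) := by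
            refine (abs_add_le _ _).trans (add_le_add ih ?_)
            rw [abs_mul, abs_of_nonneg hstep]
            exact mul_le_mul_of_nonneg_right (hc _ (by omega)) hstep
        _ = B * (f m - f (k + 1)) := by ring
  have boundary : |(∑ i ∈ Ico m k, c i) * f k| ≤ B * f k := by
    rw [abs_mul, abs_of_nonneg (hf0 k hmk)]
    exact mul_le_mul_of_nonneg_right (hc k hmk) (hf0 k hmk)
  calc |∑ i ∈ Ico m k, c i * f i|
      ≤ |∑ i ∈ Ico m k, c i * f i - (∑ i ∈ Ico m k, c i) * f k|
          + |(∑ i ∈ Ico m k, c i) * f k| := by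
        exact sub_le_iff_le_add.1 (abs_sub_abs_le_abs_sub _ _)
    _ ≤ B * f m := by linarith

theorem sum_Ioc_eq_add_sum_Ico (c : ℕ → ℝ) {m N : ℕ} (h : m ≤ N) :
    ∑ i ∈ Ioc 0 N, c i = ∑ i ∈ Ioc 0 m, c i + ∑ i ∈ Ico (m + 1) (N + 1), c i := by
  rw [← Ico_add_one_add_one_eq_Ioc, ← Ico_add_one_add_one_eq_Ioc,
    sum_Ico_consecutive _ (by omega) (by omega)]

theorem abs_sum_Ico_le_of_abs_sum_Ioc_le (h : ∀ N ≥ 1, |∑ n ∈ Ioc 0 N, c n| ≤ B) {m k : ℕ}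
    (hm : 1 ≤ m) (hk : m ≤ k) : |∑ n ∈ Ico (m + 1) (k + 1), c n| ≤ 2 * B := by
  rw [eq_sub_of_add_eq' (sum_Ioc_eq_add_sum_Ico c hk).symm]
  linarith [abs_sub (∑ i ∈ Ioc 0 k, c i) (∑ i ∈ Ioc 0 m, c i), h k (hm.trans hk), h m hm]

theorem sum_mul_log_eq_of_mul (hw : ∀ m n, w (m * n) = w m * w n) (N : ℕ) :
    ∑ n ∈ Ioc 0 N, w n * Real.log n =
      ∑ m ∈ Ioc 0 N, w m * Λ m * ∑ k ∈ Ioc 0 (N / m), w k := by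
  let F : ArithmeticFunction ℝ := ⟨fun n ↦ w n * Λ n, by simp⟩
  let G : ArithmeticFunction ℝ := ⟨fun n ↦ if n = 0 then 0 else w n, if_pos rfl⟩
  have G_apply {n : ℕ} (hn : n ≠ 0) : G n = w n := if_neg hn
  have convolution {n : ℕ} (hn : n ≠ 0) : (F * G) n = w n * Real.log n := by
    rw [ArithmeticFunction.mul_apply, ← ArithmeticFunction.vonMangoldt_sum, mul_sum,
      Nat.sum_divisorsAntidiagonal fun d e ↦ F d * G e]
    refine sum_congr rfl fun d hd ↦ ?_
    have hdn := Nat.dvd_of_mem_divisors hd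
    calc F d * G (n / d) = w d * Λ d * w (n / d) := by
          rw [G_apply (Nat.div_ne_zero_iff_of_dvd hdn |>.2 ⟨hn, (Nat.pos_of_mem_divisors hd).ne'⟩)]
          rfl
      _ = w (d * (n / d)) * Λ d := by rw [hw]; ring
      _ = w n * Λ d := by rw [Nat.mul_div_cancel' hdn]
  have pos_of_mem {n M : ℕ} (h : n ∈ Ioc 0 M) : n ≠ 0 := (mem_Ioc.1 h).1.ne'
  calc ∑ n ∈ Ioc 0 N, w n * Real.log n = ∑ n ∈ Ioc 0 N, (F * G) n :=
        sum_congr rfl fun n hn ↦ (convolution (pos_of_mem hn)).symm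
    _ = ∑ m ∈ Ioc 0 N, F m * ∑ k ∈ Ioc 0 (N / m), G k :=
        ArithmeticFunction.sum_Ioc_mul_eq_sum_sum F G N
    _ = ∑ m ∈ Ioc 0 N, w m * Λ m * ∑ k ∈ Ioc 0 (N / m), w k :=
        sum_congr rfl fun m _ ↦ congrArg (F m * ·) <|
          sum_congr rfl fun k hk ↦ G_apply (pos_of_mem hk)

theorem sum_vonMangoldt_le (N : ℕ) : ∑ m ∈ Ioc 0 N, Λ m ≤ 6 * N := by
  have hψ := Chebyshev.psi_le_const_mul_self N.cast_nonneg
  rw [Chebyshev.psi, Nat.floor_natCast] at hψ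
  have hlog : Real.log 4 + 4 ≤ 6 := by
    rw [show Real.log 4 = 2 * Real.log 2 by rw [← Real.log_rpow two_pos]; norm_num]
    linarith [Real.log_two_lt_d9]
  exact hψ.trans (mul_le_mul_of_nonneg_right hlog N.cast_nonneg)

theorem sum_log_eq_log_factorial (N : ℕ) :
    ∑ n ∈ Ioc 0 N, Real.log n = Real.log N.factorial := by
  rw [← Ico_add_one_add_one_eq_Ioc, ← prod_Ico_id_eq_factorial, Nat.cast_prod,
    Real.log_prod fun n hn ↦ Nat.cast_ne_zero.2 (Nat.one_le_iff_ne_zero.1 (mem_Ico.1 hn).1),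
    zero_add]

theorem abs_log_factorial_sub_le (N : ℕ) :
    |Real.log N.factorial - N * Real.log N| ≤ N := by
  obtain rfl | hN := N.eq_zero_or_pos
  · simp
  have lower := Stirling.le_log_factorial_stirling hN.ne'
  have upper : Real.log N.factorial ≤ N * Real.log N := by
    rw [← Real.log_pow]
    exact Real.log_le_log (by positivity) (by exact_mod_cast N.factorial_le_pow)
  have hlogN : 0 ≤ Real.log N := Real.log_natCast_nonneg N
  have hlogpi : 0 ≤ Real.log (2 * Real.pi) := Real.log_nonneg (by linarith [Real.pi_gt_three])
  rw [abs_le]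
  constructor <;> linarith [N.cast_nonneg (α := ℝ)]

theorem natCast_div_lt_add_one (N m : ℕ) : (N : ℝ) / m < (N / m : ℕ) + 1 := by
  simpa [Nat.floor_div_natCast] using Nat.lt_floor_add_one ((N : ℝ) / m)

theorem abs_sum_vonMangoldt_div_sub_log_le {N : ℕ} (hN : N ≠ 0) :
    |∑ m ∈ Ioc 0 N, Λ m / m - Real.log N| ≤ 7 := by
  have hN' : (0 : ℝ) < N := by positivity
  have hfactorial : Real.log N.factorial = ∑ m ∈ Ioc 0 N, Λ m * (N / m : ℕ) := by
    simpa [sum_log_eq_log_factorial] using sum_mul_log_eq_of_mul (w := 1) (by simp) N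
  have floor_error : |N * ∑ m ∈ Ioc 0 N, Λ m / m - Real.log N.factorial| ≤ 6 * N := by
    rw [hfactorial, mul_sum, ← sum_sub_distrib]
    refine (abs_sum_le_sum_abs _ _).trans ?_
    refine le_trans (sum_le_sum fun m _ ↦ ?_) (sum_vonMangoldt_le N)
    rw [show N * (Λ m / m) - Λ m * (N / m : ℕ) = Λ m * (N / m - (N / m : ℕ)) by ring, abs_mul,
      abs_of_nonneg ArithmeticFunction.vonMangoldt_nonneg]
    refine mul_le_of_le_one_right ArithmeticFunction.vonMangoldt_nonneg ?_
    rw [abs_of_nonneg (sub_nonneg.2 Nat.cast_div_le), sub_le_iff_le_add']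
    exact (natCast_div_lt_add_one N m).le
  have hscaled : |N * (∑ m ∈ Ioc 0 N, Λ m / m - Real.log N)| ≤ N * 7 := by
    have := abs_add_le (N * ∑ m ∈ Ioc 0 N, Λ m / m - Real.log N.factorial)
      (Real.log N.factorial - N * Real.log N)
    rw [sub_add_sub_cancel, ← mul_sub] at this
    linarith [abs_log_factorial_sub_le N]
  rw [abs_mul, abs_of_pos hN'] at hscaled
  exact le_of_mul_le_mul_left hscaled hN'

theorem abs_sum_Ico_div_le (hB : ∀ m k, |∑ i ∈ Ico m k, c i| ≤ B) {m : ℕ} (hm : 1 ≤ m) (k : ℕ) :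
    |∑ i ∈ Ico m k, c i / i| ≤ B / m := by
  have h := abs_sum_mul_le_of_antitoneOn (f := fun n : ℕ ↦ ((n : ℝ))⁻¹) (m := m)
    (fun n _ ↦ by positivity) (fun i hi j _ hij ↦ ?_) (fun k _ ↦ hB m k) k
  · simpa only [div_eq_mul_inv] using h
  · have : 0 < i := hm.trans hi
    exact inv_anti₀ (by positivity) (by exact_mod_cast hij)

theorem antitoneOn_log_div_self_natCast :
    AntitoneOn (fun n : ℕ ↦ Real.log n / n) (Set.Ici 3) := by
  have exp_le {n : ℕ} (hn : 3 ≤ n) : Real.exp 1 ≤ n :=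
    Real.exp_one_lt_three.le.trans (by exact_mod_cast hn)
  exact fun i hi j hj hij ↦
    Real.log_div_self_antitoneOn (exp_le hi) (exp_le hj) (by exact_mod_cast hij)

theorem abs_sum_div_mul_log_le (hc : ∀ n, |c n| ≤ 1) (hB : ∀ m k, |∑ i ∈ Ico m k, c i| ≤ B)
    (N : ℕ) : |∑ n ∈ Ioc 0 N, c n / n * Real.log n| ≤ 1 + B := by
  have hB0 : 0 ≤ B := by simpa using hB 0 0
  have tail : |∑ n ∈ Ico 3 (N + 1), c n / n * Real.log n| ≤ B := by
    have h := abs_sum_mul_le_of_antitoneOn (fun n _ ↦ by positivity)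
      antitoneOn_log_div_self_natCast (fun k _ ↦ hB 3 k) (N + 1)
    have hsum : ∑ n ∈ Ico 3 (N + 1), c n / n * Real.log n
        = ∑ n ∈ Ico 3 (N + 1), c n * (Real.log n / n) := sum_congr rfl fun n _ ↦ by ring
    rw [hsum]
    refine h.trans (mul_le_of_le_one_right hB0 ?_)
    exact div_le_one_of_le₀ ((Real.log_le_sub_one_of_pos (by norm_num)).trans (by norm_num))
      (by norm_num)
  obtain hN | hN := lt_or_ge N 2
  · interval_cases N <;> simp <;> linarith
  have head : |∑ n ∈ Ioc 0 2, c n / n * Real.log n| ≤ 1 := by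
    have hlog : Real.log 2 ≤ 1 := by linarith [Real.log_two_lt_d9]
    rw [show Ioc 0 2 = {1, 2} from rfl, sum_pair (by norm_num), Nat.cast_one, Real.log_one,
      mul_zero, zero_add, abs_mul, abs_div, Nat.cast_two, abs_two,
      abs_of_nonneg (Real.log_nonneg one_le_two)]
    exact mul_le_one₀ (by linarith [hc 2]) (Real.log_nonneg one_le_two) hlog
  rw [sum_Ioc_eq_add_sum_Ico _ hN]
  exact (abs_add_le _ _).trans (add_le_add head tail)

theorem abs_sum_div_sub_sum_div_le (hB : ∀ m k, |∑ i ∈ Ico m k, c i| ≤ B) {m N : ℕ}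
    (hm : 0 < m) (hN : 0 < N) :
    |∑ k ∈ Ioc 0 N, c k / k - ∑ k ∈ Ioc 0 (N / m), c k / k| ≤ B * m / N := by
  have hB0 : 0 ≤ B := by simpa using hB 0 0
  rw [sum_Ioc_eq_add_sum_Ico _ (N.div_le_self m), add_sub_cancel_left]
  refine (abs_sum_Ico_div_le hB (Nat.le_add_left 1 _) _).trans ?_
  rw [mul_div_assoc, ← inv_div (N : ℝ), ← div_eq_mul_inv, Nat.cast_add_one]
  exact div_le_div_of_nonneg_left hB0 (by positivity) (natCast_div_lt_add_one N m).le

theorem abs_sum_div_mul_vonMangoldt_mul_sub_le (hc : ∀ n, |c n| ≤ 1)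
    (hB : ∀ m k, |∑ i ∈ Ico m k, c i| ≤ B) {N : ℕ} (hN : 0 < N) :
    |∑ m ∈ Ioc 0 N,
        c m / m * Λ m * (∑ k ∈ Ioc 0 N, c k / k - ∑ k ∈ Ioc 0 (N / m), c k / k)| ≤ 6 * B := by
  have hB0 : 0 ≤ B := by simpa using hB 0 0
  refine (abs_sum_le_sum_abs _ _).trans ?_
  calc _ ≤ ∑ m ∈ Ioc 0 N, Λ m * (B / N) := by
        refine sum_le_sum fun m hm ↦ ?_
        have hm0 : 0 < m := (mem_Ioc.1 hm).1
        have hΛ : 0 ≤ Λ m := ArithmeticFunction.vonMangoldt_nonneg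
        rw [abs_mul, abs_mul, abs_div, Nat.abs_cast, abs_of_nonneg hΛ]
        calc |c m| / m * Λ m * |∑ k ∈ Ioc 0 N, c k / k - ∑ k ∈ Ioc 0 (N / m), c k / k|
            ≤ 1 / m * Λ m * (B * m / N) := by
              gcongr
              exacts [hc m, abs_sum_div_sub_sum_div_le hB hm0 hN]
          _ = Λ m * (B / N) := by field_simp
    _ ≤ 6 * N * (B / N) := by
        rw [← sum_mul]
        exact mul_le_mul_of_nonneg_right (sum_vonMangoldt_le N) (by positivity)
    _ = 6 * B := by field_simp

/- Swapping the order in `∑ c(n) log n / n = ∑ c(m) Λ(m) / m * ∑_{k ≤ N/m} c(k) / k` and replacing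
the inner sum by the full one `L` costs only `O(1)`; then divide by `L`. -/
theorem abs_sum_div_mul_vonMangoldt_le (hmul : ∀ m n, c (m * n) = c m * c n)
    (hc : ∀ n, |c n| ≤ 1) (hB : ∀ m k, |∑ i ∈ Ico m k, c i| ≤ B)
    (hδ : 0 < δ) (hL : ∀ N ≥ 1, δ ≤ |∑ k ∈ Ioc 0 N, c k / k|) (N : ℕ) :
    |∑ m ∈ Ioc 0 N, c m / m * Λ m| ≤ (1 + 7 * B) / δ := by
  have hB0 : 0 ≤ B := by simpa using hB 0 0
  obtain rfl | hN := N.eq_zero_or_pos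
  · simpa using by positivity
  have decomposition : (∑ k ∈ Ioc 0 N, c k / k) * ∑ m ∈ Ioc 0 N, c m / m * Λ m =
      ∑ n ∈ Ioc 0 N, c n / n * Real.log n + ∑ m ∈ Ioc 0 N,
        c m / m * Λ m * (∑ k ∈ Ioc 0 N, c k / k - ∑ k ∈ Ioc 0 (N / m), c k / k) := by
    rw [sum_mul_log_eq_of_mul (w := fun n ↦ c n / n)
      (fun m n ↦ by rw [hmul, Nat.cast_mul, mul_div_mul_comm]) N, ← sum_add_distrib, mul_sum]
    exact sum_congr rfl fun m _ ↦ by ring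
  rw [le_div_iff₀' hδ]
  calc δ * |∑ m ∈ Ioc 0 N, c m / m * Λ m|
      ≤ |∑ k ∈ Ioc 0 N, c k / k| * |∑ m ∈ Ioc 0 N, c m / m * Λ m| := by gcongr; exact hL N hN
    _ ≤ (1 + B) + 6 * B := by
        rw [← abs_mul, decomposition]
        exact (abs_add_le _ _).trans <| add_le_add (abs_sum_div_mul_log_le hc hB N)
          (abs_sum_div_mul_vonMangoldt_mul_sub_le hc hB hN)
    _ = 1 + 7 * B := by ring

/-- The nonprincipal Dirichlet character modulo `4` with real values on the natural numbers; `1 + χ`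
counts the square roots of `-1` modulo a prime. -/
noncomputable def chi4 (n : ℕ) : ℝ := ((ZMod.χ₄ n : ℤ) : ℝ)

theorem chi4_mul (m n : ℕ) : chi4 (m * n) = chi4 m * chi4 n := by
  rw [chi4, Nat.cast_mul, map_mul, Int.cast_mul, chi4, chi4]

theorem chi4_eq_ite (n : ℕ) : chi4 n = if n % 2 = 0 then 0 else if n % 4 = 1 then 1 else -1 := by
  rw [chi4, ZMod.χ₄_nat_eq_if_mod_four]
  split_ifs <;> simp

theorem abs_chi4_le_one (n : ℕ) : |chi4 n| ≤ 1 := by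
  rw [chi4_eq_ite]
  split_ifs <;> simp

theorem sum_range_chi4 (k : ℕ) : ∑ i ∈ range k, chi4 i = if k % 4 < 2 then 0 else 1 := by
  induction k with
  | zero => simp
  | succ k ih =>
    rw [sum_range_succ, ih, chi4_eq_ite]
    have : k % 4 < 4 := Nat.mod_lt _ (by norm_num)
    split_ifs <;> first | omega | norm_num

theorem abs_sum_Ico_chi4_le_one (m k : ℕ) : |∑ i ∈ Ico m k, chi4 i| ≤ 1 := by
  obtain h | h := le_total m k
  · rw [sum_Ico_eq_sub _ h, sum_range_chi4, sum_range_chi4]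
    split_ifs <;> simp
  · simp [Ico_eq_empty_of_le h]

theorem two_thirds_le_sum_chi4_div {N : ℕ} (hN : 1 ≤ N) :
    2 / 3 ≤ ∑ k ∈ Ioc 0 N, chi4 k / k := by
  obtain rfl | hN2 := hN.eq_or_lt
  · norm_num [chi4_eq_ite]
  have head : ∑ k ∈ Ioc 0 2, chi4 k / k = 1 := by
    simp [show Ioc 0 2 = {1, 2} from rfl, chi4_eq_ite]
  have tail := abs_le.1 (abs_sum_Ico_div_le abs_sum_Ico_chi4_le_one (m := 3) (by norm_num) (N + 1))
  rw [sum_Ioc_eq_add_sum_Ico _ hN2, head]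
  norm_num at tail ⊢
  linarith [tail.1]

theorem abs_sum_chi4_div_mul_vonMangoldt_le (N : ℕ) :
    |∑ m ∈ Ioc 0 N, chi4 m / m * Λ m| ≤ 12 := by
  have h := abs_sum_div_mul_vonMangoldt_le chi4_mul abs_chi4_le_one abs_sum_Ico_chi4_le_one
    (by norm_num : (0 : ℝ) < 2 / 3)
    (fun N hN ↦ (two_thirds_le_sum_chi4_div hN).trans (le_abs_self _)) N
  norm_num at h
  exact h

/-- The summand `log p / p` of Mertens' first theorem, extended by `0` to the non-primes. -/
noncomputable def logPrimeDiv (n : ℕ) : ℝ := if n.Prime then Real.log n / n else 0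

theorem vonMangoldt_div_sub_logPrimeDiv (n : ℕ) :
    Λ n / n - logPrimeDiv n = (if n.Prime then 0 else Λ n) / n := by
  rw [logPrimeDiv]
  split_ifs with h
  · simp [ArithmeticFunction.vonMangoldt_apply_prime h]
  · simp

theorem exists_abs_sum_mul_vonMangoldt_div_sub_le : ∃ C, ∀ c : ℕ → ℝ, (∀ n, |c n| ≤ 1) →
    ∀ N, |∑ n ∈ Ioc 0 N, c n * (Λ n / n) - ∑ n ∈ Ioc 0 N, c n * logPrimeDiv n| ≤ C := by
  have summable_nonprime : Summable fun n : ℕ ↦ (if n.Prime then 0 else Λ n) / (n : ℝ) := by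
    refine (ArithmeticFunction.vonMangoldt.summable_residueClass_non_primes_div
      (q := 1) 0).congr fun n ↦ ?_
    simp [ArithmeticFunction.vonMangoldt.residueClass, Subsingleton.elim (n : ZMod 1) 0]
  have nonprime_nonneg (n : ℕ) : 0 ≤ (if n.Prime then 0 else Λ n) / (n : ℝ) :=
    div_nonneg (ite_nonneg le_rfl ArithmeticFunction.vonMangoldt_nonneg) n.cast_nonneg
  refine ⟨∑' n : ℕ, (if n.Prime then 0 else Λ n) / (n : ℝ), fun c hc N ↦ ?_⟩
  simp_rw [← sum_sub_distrib, ← mul_sub, vonMangoldt_div_sub_logPrimeDiv]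
  refine (abs_sum_le_sum_abs _ _).trans <| (sum_le_sum fun n _ ↦ ?_).trans <|
    summable_nonprime.sum_le_tsum _ fun n _ ↦ nonprime_nonneg n
  rw [abs_mul, abs_of_nonneg (nonprime_nonneg n)]
  exact mul_le_of_le_one_left (nonprime_nonneg n) (hc n)

theorem exists_abs_sum_logPrimeDiv_sub_log_le :
    ∃ C, ∀ N ≥ 1, |∑ n ∈ Ioc 0 N, logPrimeDiv n - Real.log N| ≤ C := by
  obtain ⟨C, hC⟩ := exists_abs_sum_mul_vonMangoldt_div_sub_le
  refine ⟨C + 7, fun N hN ↦ ?_⟩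
  have hprime := hC 1 (by simp) N
  simp only [Pi.one_apply, one_mul] at hprime
  rw [abs_sub_comm] at hprime
  have hΛ := abs_sum_vonMangoldt_div_sub_log_le (N := N) (by omega)
  exact (abs_sub_le _ (∑ n ∈ Ioc 0 N, Λ n / n) _).trans (add_le_add hprime hΛ)

theorem exists_abs_sum_chi4_mul_logPrimeDiv_le :
    ∃ C, ∀ N, |∑ n ∈ Ioc 0 N, chi4 n * logPrimeDiv n| ≤ C := by
  obtain ⟨C, hC⟩ := exists_abs_sum_mul_vonMangoldt_div_sub_le
  refine ⟨C + 12, fun N ↦ ?_⟩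
  have hprime := hC chi4 abs_chi4_le_one N
  have hΛ := abs_sum_chi4_div_mul_vonMangoldt_le N
  simp_rw [div_mul_eq_mul_div, mul_div_assoc] at hΛ
  linarith [abs_sub_abs_le_abs_sub (∑ n ∈ Ioc 0 N, chi4 n * logPrimeDiv n)
    (∑ n ∈ Ioc 0 N, chi4 n * (Λ n / n)), abs_sub_comm (∑ n ∈ Ioc 0 N, chi4 n * logPrimeDiv n)
    (∑ n ∈ Ioc 0 N, chi4 n * (Λ n / n))]

theorem abs_harmonic_sub_log_le {N : ℕ} (hN : 1 ≤ N) :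
    |∑ n ∈ Ioc 0 N, (n : ℝ)⁻¹ - Real.log N| ≤ 1 := by
  have hsum : ((harmonic N : ℚ) : ℝ) = ∑ n ∈ Ioc 0 N, (n : ℝ)⁻¹ := by
    rw [harmonic_eq_sum_Icc]
    push_cast
    rfl
  have hmono : Real.log N ≤ Real.log (N + 1) :=
    Real.log_le_log (by exact_mod_cast hN) (by linarith)
  have lower := log_add_one_le_harmonic N
  have upper := harmonic_le_one_add_log N
  push_cast at lower
  rw [← hsum, abs_le]
  constructor <;> linarith

theorem antitoneOn_inv_log_natCast :
    AntitoneOn (fun n : ℕ ↦ (Real.log n)⁻¹) (Set.Ici 2) := fun i hi j _ hij ↦ by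
  have hi2 : (2 : ℝ) ≤ i := by exact_mod_cast hi
  exact inv_anti₀ (Real.log_pos (by linarith))
    (Real.log_le_log (by linarith) (by exact_mod_cast hij))

theorem log_sub_log_le_sub_div {a b : ℝ} (ha : 0 < a) (hb : 0 < b) :
    Real.log b - Real.log a ≤ (b - a) / a := by
  rw [← Real.log_div hb.ne' ha.ne', sub_div, div_self ha.ne']
  exact Real.log_le_sub_one_of_pos (by positivity)

theorem sub_div_le_log_sub_log {a b : ℝ} (ha : 0 < a) (hb : 0 < b) :
    (b - a) / b ≤ Real.log b - Real.log a := by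
  have := log_sub_log_le_sub_div hb ha
  have e : (b - a) / b = -((a - b) / b) := by ring
  linarith

theorem log_log_succ_sub_log_log_mem_Icc {n : ℕ} (hn : 2 ≤ n) :
    Real.log (Real.log (n + 1 : ℕ)) - Real.log (Real.log n) ∈
      Set.Icc (((n + 1 : ℕ) * Real.log (n + 1 : ℕ))⁻¹) ((n * Real.log n)⁻¹) := by
  have hn2 : (2 : ℝ) ≤ n := by exact_mod_cast hn
  have hlog : 0 < Real.log n := Real.log_pos (by linarith)
  have hlog' : 0 < Real.log (n + 1 : ℕ) := Real.log_pos (by push_cast; linarith)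
  have lower := sub_div_le_log_sub_log (a := n) (b := (n + 1 : ℕ)) (by linarith) (by positivity)
  have upper := log_sub_log_le_sub_div (a := n) (b := (n + 1 : ℕ)) (by linarith) (by positivity)
  rw [Nat.cast_succ, add_sub_cancel_left, ← Nat.cast_succ, one_div] at lower upper
  rw [mul_inv, mul_inv, ← div_eq_mul_inv, ← div_eq_mul_inv]
  exact ⟨(div_le_div_of_nonneg_right lower hlog'.le).trans (sub_div_le_log_sub_log hlog hlog'),
    (log_sub_log_le_sub_div hlog hlog').trans (div_le_div_of_nonneg_right upper hlog.le)⟩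

theorem log_log_sub_le_sum_inv_mul_log {k : ℕ} (hk : 2 ≤ k) :
    Real.log (Real.log k) - Real.log (Real.log 2) ≤ ∑ n ∈ Ico 2 k, ((n : ℝ) * Real.log n)⁻¹ := by
  induction k, hk using Nat.le_induction with
  | base => simp
  | succ k hk ih =>
    rw [sum_Ico_succ_top hk]
    linarith [(log_log_succ_sub_log_log_mem_Icc hk).2]

theorem sum_inv_mul_log_le_log_log_sub {k : ℕ} (hk : 2 ≤ k) :
    ∑ n ∈ Ico 2 (k + 1), ((n : ℝ) * Real.log n)⁻¹ ≤
      (2 * Real.log 2)⁻¹ + (Real.log (Real.log k) - Real.log (Real.log 2)) := by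
  induction k, hk using Nat.le_induction with
  | base => simp
  | succ k hk ih =>
    rw [sum_Ico_succ_top (by omega)]
    linarith [(log_log_succ_sub_log_log_mem_Icc hk).1]

theorem exists_abs_sum_inv_mul_log_sub_log_log_le : ∃ C, ∀ z : ℝ, 2 ≤ z →
    |∑ n ∈ Ico 2 (⌊z⌋₊ + 1), ((n : ℝ) * Real.log n)⁻¹ - Real.log (Real.log z)| ≤ C := by
  refine ⟨(2 * Real.log 2)⁻¹ + |Real.log (Real.log 2)|, fun z hz ↦ ?_⟩
  have hz2 : 2 ≤ ⌊z⌋₊ := Nat.le_floor (by exact_mod_cast hz)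
  have hz2' : (2 : ℝ) ≤ ⌊z⌋₊ := by exact_mod_cast hz2
  have log_log_mono {u v : ℝ} (hu : 2 ≤ u) (huv : u ≤ v) :
      Real.log (Real.log u) ≤ Real.log (Real.log v) :=
    Real.log_le_log (Real.log_pos (by linarith)) (Real.log_le_log (by linarith) huv)
  have lower := log_log_sub_le_sum_inv_mul_log (k := ⌊z⌋₊ + 1) (by omega)
  have upper := sum_inv_mul_log_le_log_log_sub hz2
  have floor_le := log_log_mono hz2' (Nat.floor_le (by linarith))
  have le_floor := log_log_mono hz (by exact_mod_cast (Nat.lt_floor_add_one z).le :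
    z ≤ (⌊z⌋₊ + 1 : ℕ))
  have : 0 ≤ (2 * Real.log 2)⁻¹ := by positivity
  rw [abs_le]
  constructor <;>
    linarith [neg_abs_le (Real.log (Real.log 2)), le_abs_self (Real.log (Real.log 2))]

theorem exists_abs_sum_div_log_sub_log_log_le
    (hc : ∀ N ≥ 1, |∑ n ∈ Ioc 0 N, c n - Real.log N| ≤ C) : ∃ C', ∀ z : ℝ, 2 ≤ z →
      |∑ n ∈ Ico 2 (⌊z⌋₊ + 1), c n / Real.log n - Real.log (Real.log z)| ≤ C' := by
  obtain ⟨D, hD⟩ := exists_abs_sum_inv_mul_log_sub_log_log_le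
  have sum_sub_inv (N : ℕ) (hN : 1 ≤ N) : |∑ n ∈ Ioc 0 N, (c n - (n : ℝ)⁻¹)| ≤ C + 1 := by
    rw [sum_sub_distrib, ← sub_sub_sub_cancel_right _ _ (Real.log N)]
    exact (abs_sub _ _).trans (add_le_add (hc N hN) (abs_harmonic_sub_log_le hN))
  have hcomparison (K : ℕ) := abs_sum_mul_le_of_antitoneOn (m := 2)
    (fun n _ ↦ inv_nonneg.2 (Real.log_natCast_nonneg n)) antitoneOn_inv_log_natCast
    (c := fun n ↦ c n - (n : ℝ)⁻¹) (B := 2 * (C + 1)) (fun k hk ↦ by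
      obtain ⟨k, rfl⟩ := Nat.exists_eq_add_of_le' (show 1 ≤ k by omega)
      exact abs_sum_Ico_le_of_abs_sum_Ioc_le sum_sub_inv le_rfl (by omega)) K
  refine ⟨2 * (C + 1) * (Real.log 2)⁻¹ + D, fun z hz ↦ ?_⟩
  refine (abs_sub_le _ (∑ n ∈ Ico 2 (⌊z⌋₊ + 1), ((n : ℝ) * Real.log n)⁻¹) _).trans
    (add_le_add ?_ (hD z hz))
  rw [← sum_sub_distrib]
  refine le_of_eq_of_le (congrArg _ (sum_congr rfl fun n _ ↦ ?_)) (hcomparison _)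
  rw [mul_inv, sub_mul, div_eq_mul_inv]

/-- The primes in the half-open interval `(u, v]`. -/
noncomputable def primesIoc (u v : ℝ) : Finset ℕ := {p ∈ Ioc ⌊u⌋₊ ⌊v⌋₊ | p.Prime}

theorem mem_primesIoc {u v : ℝ} {p : ℕ} : p ∈ primesIoc u v ↔ p.Prime ∧ u < p ∧ p ≤ v := by
  rw [primesIoc, mem_filter, mem_Ioc, and_comm]
  exact and_congr_right fun hp ↦
    and_congr (Nat.floor_lt' hp.ne_zero) (Nat.le_floor_iff' hp.ne_zero)

theorem exists_abs_sum_one_add_chi4_div_sub_log_log_le : ∃ C, ∀ z : ℝ, 2 ≤ z →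
    |∑ p ∈ primesIoc 0 z, (1 + chi4 p) / p - Real.log (Real.log z)| ≤ C := by
  obtain ⟨A, hA⟩ := exists_abs_sum_logPrimeDiv_sub_log_le
  obtain ⟨B, hB⟩ := exists_abs_sum_chi4_mul_logPrimeDiv_le
  obtain ⟨C, hC⟩ := exists_abs_sum_div_log_sub_log_log_le (C := A + B)
    (c := fun n ↦ (1 + chi4 n) * logPrimeDiv n) fun N hN ↦ by
      simp_rw [add_mul, one_mul, sum_add_distrib, add_sub_right_comm]
      exact (abs_add_le _ _).trans (add_le_add (hA N hN) (hB N))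
  refine ⟨C, fun z hz ↦ le_of_eq_of_le ?_ (hC z hz)⟩
  have hfloor : 1 ≤ ⌊z⌋₊ := Nat.le_floor (by push_cast; linarith)
  rw [primesIoc, Nat.floor_zero, sum_filter, ← Ico_add_one_add_one_eq_Ioc, zero_add,
    sum_eq_sum_Ico_succ_bot (by omega), if_neg Nat.not_prime_one, zero_add]
  refine congrArg (|· - _|) (sum_congr rfl fun n hn ↦ ?_)
  have hn2 : (2 : ℝ) ≤ n := by exact_mod_cast (mem_Ico.1 hn).1
  have hlog : Real.log n ≠ 0 := (Real.log_pos (by linarith)).ne'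
  rw [logPrimeDiv]
  split_ifs
  · field_simp
  · simp

theorem logPrimeDiv_nonneg (n : ℕ) : 0 ≤ logPrimeDiv n :=
  ite_nonneg (div_nonneg (Real.log_natCast_nonneg n) n.cast_nonneg) le_rfl

theorem inv_le_two_div_log_mul_logPrimeDiv {u : ℝ} {p : ℕ} (hu : 1 < u)
    (hp : p ∈ primesIoc √u u) : (p : ℝ)⁻¹ ≤ 2 / Real.log u * logPrimeDiv p := by
  obtain ⟨hprime, hlt, -⟩ := mem_primesIoc.1 hp
  have hlogu : 0 < Real.log u := Real.log_pos hu
  have hlog : Real.log u / 2 ≤ Real.log p := by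
    rw [← Real.log_sqrt (by linarith)]
    exact Real.log_le_log (by positivity) hlt.le
  rw [logPrimeDiv, if_pos hprime, ← mul_div_assoc, inv_eq_one_div]
  refine div_le_div_of_nonneg_right ?_ p.cast_nonneg
  rw [div_mul_eq_mul_div, one_le_div hlogu]
  linarith

theorem eventually_sum_inv_primesIoc_sqrt_le :
    ∀ᶠ u : ℝ in Filter.atTop, ∑ p ∈ primesIoc √u u, (p : ℝ)⁻¹ ≤ 5 / 4 := by
  obtain ⟨C, hC⟩ := exists_abs_sum_logPrimeDiv_sub_log_le
  filter_upwards [Filter.eventually_ge_atTop 4,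
    Filter.eventually_ge_atTop (Real.exp (8 * Real.log 2 + 16 * C))] with u hu4 hu
  have hlogu : 0 < Real.log u := Real.log_pos (by linarith)
  have hlogu_large : 8 * Real.log 2 + 16 * C ≤ Real.log u :=
    (Real.le_log_iff_exp_le (by linarith)).2 hu
  have hsqrt : 2 ≤ √u := Real.le_sqrt_of_sq_le (by linarith)
  have hfloor_sqrt : 1 ≤ ⌊√u⌋₊ := Nat.le_floor (by push_cast; linarith)
  have hfloors : ⌊√u⌋₊ ≤ ⌊u⌋₊ := Nat.floor_le_floor (Real.sqrt_le_iff.2 ⟨by linarith, by nlinarith⟩)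
  have upper := (abs_le.1 (hC ⌊u⌋₊ (hfloor_sqrt.trans hfloors))).2
  have lower := (abs_le.1 (hC ⌊√u⌋₊ hfloor_sqrt)).1
  have log_floor : Real.log ⌊u⌋₊ ≤ Real.log u :=
    Real.log_le_log (by exact_mod_cast hfloor_sqrt.trans hfloors) (Nat.floor_le (by linarith))
  have log_floor_sqrt : Real.log u / 2 - Real.log 2 ≤ Real.log ⌊√u⌋₊ := by
    rw [← Real.log_sqrt (by linarith), ← Real.log_div (by positivity) two_ne_zero]
    exact Real.log_le_log (by positivity) (by linarith [Nat.lt_floor_add_one √u])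
  calc ∑ p ∈ primesIoc √u u, (p : ℝ)⁻¹
      ≤ ∑ p ∈ primesIoc √u u, 2 / Real.log u * logPrimeDiv p :=
        sum_le_sum fun p hp ↦ inv_le_two_div_log_mul_logPrimeDiv (by linarith) hp
    _ ≤ 2 / Real.log u * ∑ n ∈ Ico (⌊√u⌋₊ + 1) (⌊u⌋₊ + 1), logPrimeDiv n := by
        rw [← mul_sum, Ico_add_one_add_one_eq_Ioc]
        exact mul_le_mul_of_nonneg_left (sum_le_sum_of_subset_of_nonneg (filter_subset _ _)
          fun n _ _ ↦ logPrimeDiv_nonneg n) (by positivity)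
    _ ≤ 2 / Real.log u * (Real.log u / 2 + Real.log 2 + 2 * C) := by
        gcongr
        linarith [sum_Ioc_eq_add_sum_Ico logPrimeDiv hfloors]
    _ = 1 + (2 * Real.log 2 + 4 * C) / Real.log u := by field_simp; ring
    _ ≤ 5 / 4 := by
        have : (2 * Real.log 2 + 4 * C) / Real.log u ≤ 1 / 4 := by
          rw [div_le_iff₀ hlogu]; linarith
        linarith

end Mertens

section RootCount

open Finset

theorem sq_eq_sq_iff_of_isUnit_two_mul {R : Type*} [CommRing R] [IsLocalRing R] {x y : R}
    (h : IsUnit (2 * y)) : x ^ 2 = y ^ 2 ↔ x = y ∨ x = -y := by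
  refine ⟨fun hxy ↦ ?_, by rintro (rfl | rfl) <;> simp⟩
  have hmul : (x + y) * (y - x) = 0 := by linear_combination -hxy
  have hadd : IsUnit ((x + y) + (y - x)) := by convert h using 1; ring
  rcases IsLocalRing.isUnit_or_isUnit_of_isUnit_add hadd with hu | hu
  · exact .inl (sub_eq_zero.1 (hu.mul_right_eq_zero.1 hmul)).symm
  · exact .inr (eq_neg_of_add_eq_zero_left (hu.mul_left_eq_zero.1 hmul))

theorem card_sq_add_one_eq_zero {R : Type*} [CommRing R] [IsLocalRing R] (h2 : IsUnit (2 : R))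
    {s : R} (hs : s ^ 2 + 1 = 0) : Nat.card {r : R // r ^ 2 + 1 = 0} = 2 := by
  have hsu : IsUnit s := .of_mul_eq_one (-s) (by linear_combination -hs)
  have root_iff (r : R) : r ^ 2 + 1 = 0 ↔ r = s ∨ r = -s := by
    rw [← sq_eq_sq_iff_of_isUnit_two_mul (h2.mul hsu), ← sub_eq_zero (b := s ^ 2)]
    exact Eq.congr_left (by linear_combination hs)
  have s_ne_neg : s ≠ -s := fun h ↦
    (h2.mul hsu).ne_zero (by linear_combination h)
  rw [Nat.card_eq_two_iff]
  refine ⟨⟨s, hs⟩, ⟨-s, by rwa [neg_sq]⟩, by simpa [Subtype.ext_iff] using s_ne_neg, ?_⟩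
  ext ⟨r, hr⟩
  simpa [Subtype.ext_iff] using (root_iff r).1 hr

/-- The number of square roots of `-1` modulo `m`. -/
noncomputable def rootCount (m : ℕ) : ℕ := Nat.card {r : ZMod m // r ^ 2 + 1 = 0}

theorem rootCount_one : rootCount 1 = 1 :=
  Nat.card_eq_one_iff_unique.2
    ⟨⟨fun _ _ ↦ Subtype.ext (Subsingleton.elim _ _)⟩, ⟨⟨0, Subsingleton.elim _ _⟩⟩⟩

theorem rootCount_two : rootCount 2 = 1 := by
  rw [rootCount, Nat.card_eq_fintype_card]
  decide

theorem rootCount_mul {m n : ℕ} (h : m.Coprime n) :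
    rootCount (m * n) = rootCount m * rootCount n := by
  let e := ZMod.chineseRemainder h
  rw [rootCount, rootCount, rootCount, ← Nat.card_prod]
  refine Nat.card_congr ((e.toEquiv.subtypeEquiv
    (q := fun x ↦ x.1 ^ 2 + 1 = 0 ∧ x.2 ^ 2 + 1 = 0) fun r ↦ ?_).trans
    (Equiv.subtypeProdEquivProd (p := fun r ↦ r ^ 2 + 1 = 0) (q := fun r ↦ r ^ 2 + 1 = 0)))
  have he : e (r ^ 2 + 1) = e r ^ 2 + 1 := by simp
  rw [← map_eq_zero_iff e e.injective, he, Prod.ext_iff]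
  rfl

theorem rootCount_eq_zero_of_dvd {d m : ℕ} (hd : d ∣ m) (h : ∀ r : ZMod d, r ^ 2 + 1 ≠ 0) :
    rootCount m = 0 := by
  have : IsEmpty {r : ZMod m // r ^ 2 + 1 = 0} :=
    ⟨fun ⟨r, hr⟩ ↦ h (ZMod.castHom hd (ZMod d) r)
      (by simpa only [map_add, map_pow, map_one, map_zero] using
        congrArg (ZMod.castHom hd (ZMod d)) hr)⟩
  exact Nat.card_of_isEmpty

theorem sq_add_one_ne_zero_of_mod_four_eq_three {p : ℕ} (hp : p.Prime) (h : p % 4 = 3)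
    (r : ZMod p) : r ^ 2 + 1 ≠ 0 := fun hr ↦
  have := Fact.mk hp
  ZMod.mod_four_ne_three_of_sq_eq_neg_one (eq_neg_of_add_eq_zero_left hr) h

theorem natCast_sq_add_one_eq_zero_iff {m n : ℕ} : (n : ZMod m) ^ 2 + 1 = 0 ↔ m ∣ n ^ 2 + 1 := by
  rw [← ZMod.natCast_eq_zero_iff]
  push_cast
  rfl

theorem not_four_dvd_sq_add_one (n : ℕ) : ¬ 4 ∣ n ^ 2 + 1 := by
  rw [← natCast_sq_add_one_eq_zero_iff]
  generalize (n : ZMod 4) = r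
  decide +revert

theorem mod_four_ne_three_of_dvd_sq_add_one {p n : ℕ} (hp : p.Prime) (h : p ∣ n ^ 2 + 1) :
    p % 4 ≠ 3 := fun h3 ↦
  sq_add_one_ne_zero_of_mod_four_eq_three hp h3 n (natCast_sq_add_one_eq_zero_iff.2 h)

theorem isLocalRing_zmod_prime_pow {p k : ℕ} (hp : p.Prime) (hk : k ≠ 0) :
    IsLocalRing (ZMod (p ^ k)) := by
  have := Fact.mk hp
  have := Fact.mk (Nat.one_lt_pow hk hp.one_lt)
  exact .of_surjective' (PadicInt.toZModPow (p := p) k) (ZMod.ringHom_surjective _)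

theorem rootCount_prime_pow_of_root {p k : ℕ} (hp : p.Prime) (hp2 : p ≠ 2) (hk : k ≠ 0)
    {s : ZMod (p ^ k)} (hs : s ^ 2 + 1 = 0) : rootCount (p ^ k) = 2 := by
  have := isLocalRing_zmod_prime_pow hp hk
  have h2 : IsUnit ((2 : ℕ) : ZMod (p ^ k)) :=
    (ZMod.isUnit_iff_coprime 2 (p ^ k)).2
      (((Nat.coprime_primes Nat.prime_two hp).2 hp2.symm).pow_right k)
  exact card_sq_add_one_eq_zero h2 hs

-- If `r² ≡ -1 (mod p)`, raising to the odd power `p ^ (k - 1)` lifts this congruence to `p ^ k`.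
theorem exists_sq_add_one_eq_zero {p : ℕ} (hp : p.Prime) (h1 : p % 4 = 1) {k : ℕ} (hk : k ≠ 0) :
    ∃ s : ZMod (p ^ k), s ^ 2 + 1 = 0 := by
  have := Fact.mk hp
  obtain ⟨y, hy⟩ := (ZMod.exists_sq_eq_neg_one_iff (p := p)).2 (by omega)
  obtain ⟨r, rfl⟩ := ZMod.intCast_surjective y
  have root_mod_p : (p : ℤ) ∣ r ^ 2 - (-1) := by
    rw [← ZMod.intCast_zmod_eq_zero_iff_dvd]
    push_cast
    linear_combination -hy
  have root_mod_pow := dvd_sub_pow_of_dvd_sub root_mod_p (k - 1)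
  have hodd : Odd (p ^ (k - 1)) := Odd.pow (Nat.odd_iff.2 (by omega))
  rw [hodd.neg_one_pow, Nat.sub_add_cancel (Nat.one_le_iff_ne_zero.2 hk), pow_right_comm,
    ← Nat.cast_pow, ← ZMod.intCast_zmod_eq_zero_iff_dvd] at root_mod_pow
  refine ⟨(r ^ p ^ (k - 1) : ℤ), ?_⟩
  push_cast at root_mod_pow ⊢
  linear_combination root_mod_pow

theorem rootCount_prime_pow {p k : ℕ} (hp : p.Prime) (h1 : p % 4 = 1) (hk : k ≠ 0) :
    rootCount (p ^ k) = 2 :=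
  let ⟨_, hs⟩ := exists_sq_add_one_eq_zero hp h1 hk
  rootCount_prime_pow_of_root hp (by omega) hk hs

/-- The factor `rootCount (m * p) / rootCount m` by which the number of square roots of `-1` grows
when the modulus `m` is multiplied by a prime `p`. -/
noncomputable def rootFactor (m p : ℕ) : ℝ := (if p ∣ m then 0 else 1) + chi4 p

theorem rootCount_mul_prime {m p : ℕ} (hm : m ≠ 0) (hp : p.Prime) :
    (rootCount (m * p) : ℝ) = rootCount m * rootFactor m p := by
  have coprime_of_not_dvd {t : ℕ} (h : ¬ p ∣ t) : t.Coprime p :=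
    ((Nat.Prime.coprime_iff_not_dvd hp).2 h).symm
  obtain rfl | hodd := hp.eq_two_or_odd
  · by_cases hdvd : 2 ∣ m
    · have : rootCount (m * 2) = 0 :=
        rootCount_eq_zero_of_dvd (d := 4) (mul_dvd_mul_right hdvd 2) (by decide)
      simp [this, rootFactor, hdvd, chi4_eq_ite]
    · simp [rootCount_mul (coprime_of_not_dvd hdvd), rootCount_two, rootFactor, hdvd, chi4_eq_ite]
  obtain h1 | h3 : p % 4 = 1 ∨ p % 4 = 3 := by omega
  · by_cases hdvd : p ∣ m
    · obtain ⟨k, t, ht, rfl⟩ := Nat.exists_eq_pow_mul_and_not_dvd hm p hp.ne_one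
      have hk : k ≠ 0 := by rintro rfl; exact ht (by simpa using hdvd)
      have hcop (j : ℕ) : (p ^ j).Coprime t := ((coprime_of_not_dvd ht).pow_right j).symm
      rw [mul_right_comm, ← pow_succ, rootCount_mul (hcop _), rootCount_mul (hcop _),
        rootCount_prime_pow hp h1 hk, rootCount_prime_pow hp h1 k.succ_ne_zero]
      simp [rootFactor, hdvd, chi4_eq_ite, hodd, h1]
    · have hcount : rootCount p = 2 := by
        simpa using rootCount_prime_pow hp h1 one_ne_zero
      rw [rootCount_mul (coprime_of_not_dvd hdvd), hcount]
      norm_num [rootFactor, hdvd, chi4_eq_ite, hodd, h1]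
  · have no_root := sq_add_one_ne_zero_of_mod_four_eq_three hp h3
    rw [rootCount_eq_zero_of_dvd (dvd_mul_left p m) no_root]
    by_cases hdvd : p ∣ m
    · simp [rootCount_eq_zero_of_dvd hdvd no_root]
    · simp [rootFactor, hdvd, chi4_eq_ite, hodd, h3]

theorem rootCount_mul_prod {m : ℕ} (hm : m ≠ 0) {D : Finset ℕ} (hD : ∀ p ∈ D, p.Prime) :
    (rootCount (m * ∏ p ∈ D, p) : ℝ) = rootCount m * ∏ p ∈ D, rootFactor m p := by
  induction D using Finset.induction_on with
  | empty => simp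
  | insert q D hq ih =>
    obtain ⟨hqp, hDp⟩ := forall_mem_insert .. |>.1 hD
    have not_dvd_prod : ¬ q ∣ ∏ p ∈ D, p := fun h ↦ by
      obtain ⟨p, hp, hqd⟩ := (hqp.prime.dvd_finsetProd_iff _).1 h
      exact hq ((Nat.prime_dvd_prime_iff_eq hqp (hDp p hp)).1 hqd ▸ hp)
    have factor_eq : rootFactor (m * ∏ p ∈ D, p) q = rootFactor m q := by
      simp [rootFactor, hqp.dvd_mul, not_dvd_prod]
    rw [prod_insert hq, prod_insert hq, mul_comm q, ← mul_assoc,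
      rootCount_mul_prime (mul_ne_zero hm (prod_ne_zero_iff.2 fun p hp ↦ (hDp p hp).ne_zero)) hqp,
      ih hDp, factor_eq]
    ring

section DvdSqAddOne

variable {a n : ℕ}

theorem rootFactor_mem_Icc (h : a ∣ n ^ 2 + 1) {p : ℕ} (hp : p.Prime) :
    rootFactor a p ∈ Set.Icc 0 2 := by
  have hchi := abs_le.1 (abs_chi4_le_one p)
  by_cases hdvd : p ∣ a
  · have h3 : p % 4 ≠ 3 := mod_four_ne_three_of_dvd_sq_add_one hp (hdvd.trans h)
    have : 0 ≤ chi4 p := by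
      rw [chi4_eq_ite]
      split_ifs <;> first | omega | norm_num
    rw [rootFactor, if_pos hdvd]
    constructor <;> linarith
  · rw [rootFactor, if_neg hdvd]
    constructor <;> linarith

theorem ne_zero_of_dvd_sq_add_one (h : a ∣ n ^ 2 + 1) : a ≠ 0 :=
  ne_zero_of_dvd_ne_zero (Nat.succ_ne_zero _) h

theorem rootCount_eq_prod_primeFactors (ha : a ≠ 0) :
    rootCount a = ∏ p ∈ a.primeFactors, rootCount (p ^ a.factorization p) :=
  Nat.multiplicative_factorization rootCount (fun _ _ ↦ rootCount_mul) rootCount_one ha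

theorem rootCount_ordProj_of_odd (h : a ∣ n ^ 2 + 1) {p : ℕ} (hp : p ∈ a.primeFactors)
    (hp2 : p ≠ 2) : rootCount (p ^ a.factorization p) = 2 :=
  rootCount_prime_pow_of_root (Nat.prime_of_mem_primeFactors hp) hp2 (Finsupp.mem_support_iff.1 hp)
    (natCast_sq_add_one_eq_zero_iff.2 ((Nat.ordProj_dvd a p).trans h))

theorem rootCount_ordProj_two (h : a ∣ n ^ 2 + 1) : rootCount (2 ^ a.factorization 2) = 1 := by
  have hlt : a.factorization 2 < 2 := by
    by_contra! hge
    exact not_four_dvd_sq_add_one n (((pow_dvd_pow 2 hge).trans (Nat.ordProj_dvd a 2)).trans h)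
  interval_cases a.factorization 2
  · exact rootCount_one
  · exact rootCount_two

theorem rootCount_le_two_pow (h : a ∣ n ^ 2 + 1) : rootCount a ≤ 2 ^ #a.primeFactors := by
  rw [rootCount_eq_prod_primeFactors (ne_zero_of_dvd_sq_add_one h)]
  refine prod_le_pow_card _ _ _ fun p hp ↦ ?_
  obtain rfl | hp2 := eq_or_ne p 2
  · exact (rootCount_ordProj_two h).trans_le one_le_two
  · exact (rootCount_ordProj_of_odd h hp hp2).le

theorem two_pow_le_two_mul_rootCount (h : a ∣ n ^ 2 + 1) :
    2 ^ #a.primeFactors ≤ 2 * rootCount a := by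
  have odd_part : ∏ p ∈ a.primeFactors.erase 2, rootCount (p ^ a.factorization p) =
      2 ^ #(a.primeFactors.erase 2) :=
    prod_eq_pow_card fun p hp ↦
      rootCount_ordProj_of_odd h (mem_of_mem_erase hp) (ne_of_mem_erase hp)
  have odd_part_eq : ∏ p ∈ a.primeFactors.erase 2, rootCount (p ^ a.factorization p) =
      rootCount a := by
    rw [rootCount_eq_prod_primeFactors (ne_zero_of_dvd_sq_add_one h)]
    exact prod_erase _ (rootCount_ordProj_two h)
  rw [← odd_part_eq, odd_part, ← pow_succ']
  exact Nat.pow_le_pow_right two_pos (Nat.sub_le_iff_le_add.1 pred_card_le_card_erase)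

end DvdSqAddOne

end RootCount

section Counting

open Finset

theorem abs_card_filter_modEq_sub_le_one (N : ℕ) {m : ℕ} (hm : 0 < m) (v : ℕ) :
    |(#{n ∈ Icc 1 N | n ≡ v [MOD m]} : ℝ) - N / m| ≤ 1 := by
  change |(#{n ∈ Ioc 0 N | n ≡ v [MOD m]} : ℝ) - N / m| ≤ 1
  have hcard := Nat.Ioc_filter_modEq_card 0 N hm v
  set s : ℚ := ((0 : ℕ) - v) / m
  have hshift : ((N : ℚ) - v) / m = s + N / m := by simp only [s]; push_cast; ring
  have hmono : ⌊s⌋ ≤ ⌊s + N / m⌋ := Int.floor_mono (le_add_of_nonneg_right (by positivity))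
  rw [hshift, max_eq_left (sub_nonneg.2 hmono), ← Int.cast_inj (α := ℚ)] at hcard
  have over_rat : |(#{n ∈ Ioc 0 N | n ≡ v [MOD m]} : ℚ) - N / m| ≤ 1 := by
    push_cast at hcard
    rw [hcard, abs_le]
    constructor <;>
      linarith [Int.floor_le s, Int.lt_floor_add_one s, Int.floor_le (s + N / m),
        Int.lt_floor_add_one (s + N / m)]
  simpa using (Rat.cast_le (K := ℝ)).2 over_rat

theorem abs_card_filter_natCast_eq_sub_le_two {x : ℝ} (hx : 0 ≤ x) {m : ℕ} [NeZero m]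
    (r : ZMod m) : |(#{n ∈ Icc 1 ⌊x⌋₊ | ((n : ℕ) : ZMod m) = r} : ℝ) - x / m| ≤ 2 := by
  have hm : 1 ≤ (m : ℝ) := Nat.one_le_cast.2 (NeZero.pos m)
  have hcount := abs_card_filter_modEq_sub_le_one ⌊x⌋₊ (NeZero.pos m) r.val
  simp only [← ZMod.natCast_eq_natCast_iff, ZMod.natCast_zmod_val] at hcount
  have hfloor : |(⌊x⌋₊ : ℝ) / m - x / m| ≤ 1 := by
    rw [← sub_div, abs_div, Nat.abs_cast, abs_sub_comm]
    refine (div_le_self (abs_nonneg _) hm).trans ?_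
    rw [abs_le]
    constructor <;> linarith [Nat.floor_le hx, Nat.lt_floor_add_one x]
  linarith [abs_sub_le (#{n ∈ Icc 1 ⌊x⌋₊ | ((n : ℕ) : ZMod m) = r} : ℝ) (⌊x⌋₊ / m) (x / m)]

theorem abs_card_dvd_sq_add_one_sub_le {x : ℝ} (hx : 0 ≤ x) {m : ℕ} (hm : m ≠ 0) :
    |(#{n ∈ Icc 1 ⌊x⌋₊ | m ∣ n ^ 2 + 1} : ℝ) - x * (rootCount m / m)| ≤ 2 * rootCount m := by
  have := NeZero.mk hm
  let roots : Finset (ZMod m) := {r | r ^ 2 + 1 = 0}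
  have card_roots : (rootCount m : ℝ) = #roots := by
    rw [rootCount, Nat.card_eq_fintype_card, Fintype.card_subtype]
  have by_residue : #{n ∈ Icc 1 ⌊x⌋₊ | m ∣ n ^ 2 + 1} =
      ∑ r ∈ roots, #{n ∈ Icc 1 ⌊x⌋₊ | ((n : ℕ) : ZMod m) = r} := by
    have hmaps : ∀ n ∈ ({n ∈ Icc 1 ⌊x⌋₊ | m ∣ n ^ 2 + 1} : Finset ℕ), (n : ZMod m) ∈ roots :=
      fun n hn ↦ by simpa [roots, natCast_sq_add_one_eq_zero_iff] using (mem_filter.1 hn).2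
    rw [card_eq_sum_card_fiberwise hmaps]
    refine sum_congr rfl fun r hr ↦ congrArg card ?_
    rw [filter_filter]
    refine filter_congr fun n _ ↦ and_iff_right_of_imp ?_
    rintro rfl
    exact natCast_sq_add_one_eq_zero_iff.1 (mem_filter.1 hr).2
  calc |(#{n ∈ Icc 1 ⌊x⌋₊ | m ∣ n ^ 2 + 1} : ℝ) - x * (rootCount m / m)|
      = |∑ r ∈ roots, ((#{n ∈ Icc 1 ⌊x⌋₊ | ((n : ℕ) : ZMod m) = r} : ℝ) - x / m)| := by
        rw [by_residue, sum_sub_distrib, sum_const, nsmul_eq_mul, card_roots]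
        push_cast
        ring_nf
    _ ≤ ∑ _r ∈ roots, (2 : ℝ) :=
        (abs_sum_le_sum_abs _ _).trans
          (sum_le_sum fun r _ ↦ abs_card_filter_natCast_eq_sub_le_two hx r)
    _ = 2 * rootCount m := by rw [sum_const, nsmul_eq_mul, card_roots, mul_comm]

variable {a : ℕ}

theorem sum_prod_dvd_quotient_eq_card (ha : a ≠ 0) (x : ℝ) {D : Finset ℕ}
    (hD : ∀ p ∈ D, p.Prime) :
    ∑ n ∈ Icc 1 ⌊x⌋₊ with a ∣ n ^ 2 + 1, ∏ p ∈ D, (if p ∣ (n ^ 2 + 1) / a then (1 : ℝ) else 0) =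
      #{n ∈ Icc 1 ⌊x⌋₊ | a * ∏ p ∈ D, p ∣ n ^ 2 + 1} := by
  rw [← sum_boole, sum_filter]
  refine sum_congr rfl fun n _ ↦ ?_
  by_cases hn : a ∣ n ^ 2 + 1
  · obtain ⟨t, ht⟩ := hn
    have prod_dvd_iff : ∏ p ∈ D, p ∣ t ↔ ∀ p ∈ D, p ∣ t :=
      ⟨fun h p hp ↦ (dvd_prod_of_mem _ hp).trans h,
        prod_primes_dvd t fun p hp ↦ (hD p hp).prime⟩
    rw [ht, if_pos (dvd_mul_right a t), Nat.mul_div_cancel_left t ha.bot_lt, prod_ite_zero,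
      prod_const_one]
    exact if_congr (by rw [Nat.mul_dvd_mul_iff_left ha.bot_lt, prod_dvd_iff]) rfl rfl
  · rw [if_neg hn, if_neg fun h ↦ hn ((dvd_mul_right _ _).trans h)]

theorem rootFactor_div_mem_Icc {n : ℕ} (h : a ∣ n ^ 2 + 1) {p : ℕ} (hp : p.Prime) :
    rootFactor a p / p ∈ Set.Icc (0 : ℝ) (1 / 2) := by
  obtain ⟨h0, h2⟩ := rootFactor_mem_Icc h hp
  refine ⟨by positivity, ?_⟩
  obtain rfl | hp2 := eq_or_ne p 2
  · rw [rootFactor, chi4_eq_ite]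
    split_ifs <;> first | omega | norm_num
  obtain rfl | hp3 := eq_or_ne p 3
  · rw [rootFactor, chi4_eq_ite]
    split_ifs <;> first | omega | norm_num
  have hp4 : (4 : ℝ) ≤ p := by exact_mod_cast (by have := hp.two_le; omega : 4 ≤ p)
  rw [div_le_iff₀ (by linarith)]
  linarith

theorem hasSieveDensity_sq_add_one {n : ℕ} (h : a ∣ n ^ 2 + 1) {x : ℝ} (hx : 0 ≤ x)
    {U : Finset ℕ} (hU : ∀ p ∈ U, p.Prime) :
    HasSieveDensity {n ∈ Icc 1 ⌊x⌋₊ | a ∣ n ^ 2 + 1}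
      (fun n p ↦ if p ∣ (n ^ 2 + 1) / a then 1 else 0) U (fun p ↦ rootFactor a p / p)
      (x * (rootCount a / a)) (2 * rootCount a) 2 where
  mass_nonneg := by positivity
  base_nonneg := zero_le_two
  indicator_mem n _ p _ := by split_ifs <;> simp
  density_mem p hp :=
    let ⟨h0, h2⟩ := rootFactor_div_mem_Icc h (hU p hp)
    ⟨h0, by linarith⟩
  abs_sum_sub_le D hD := by
    have ha := ne_zero_of_dvd_sq_add_one h
    have hDp : ∀ p ∈ D, p.Prime := fun p hp ↦ hU p (hD hp)
    have hprod : ∏ p ∈ D, p ≠ 0 := prod_ne_zero_iff.2 fun p hp ↦ (hDp p hp).ne_zero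
    have hcount := abs_card_dvd_sq_add_one_sub_le hx (mul_ne_zero ha hprod)
    rw [rootCount_mul_prod ha hDp] at hcount
    have hfactors : ∏ p ∈ D, rootFactor a p ≤ 2 ^ #D :=
      (prod_le_prod (fun p hp ↦ (rootFactor_mem_Icc h (hDp p hp)).1) fun p hp ↦
        (rootFactor_mem_Icc h (hDp p hp)).2).trans_eq (prod_const 2)
    rw [sum_prod_dvd_quotient_eq_card ha x hDp, prod_div_distrib]
    push_cast at hcount
    calc _ = _ := by rw [mul_assoc, div_mul_div_comm]
      _ ≤ _ := hcount
      _ = 2 * rootCount a * ∏ p ∈ D, rootFactor a p := by ring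
      _ ≤ 2 * rootCount a * 2 ^ #D := by gcongr

end Counting

section SieveDensity

open Finset

variable {a n : ℕ} {u v : ℝ}

theorem exp_neg_add_two_mul_sq_le_one_sub (hu : u ≤ 1 / 2) :
    Real.exp (-(u + 2 * u ^ 2)) ≤ 1 - u := by
  have hpos : 0 < 1 - u := by linarith
  rw [← Real.le_log_iff_exp_le hpos]
  have hfrac : u / (1 - u) ≤ u + 2 * u ^ 2 := by
    rw [div_le_iff₀ hpos]
    nlinarith [mul_nonneg (sq_nonneg u) (sub_nonneg.2 hu)]
  have hinv : 1 - (1 - u)⁻¹ = -(u / (1 - u)) := by field_simp; ring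
  linarith [Real.one_sub_inv_le_log_of_pos hpos]

theorem one_sub_mul_one_sub_mem_Icc (hu : u ∈ Set.Icc 0 (1 / 2)) (hv : v ∈ Set.Icc 0 (1 / 2)) :
    (1 - u) * (1 - v) ∈ Set.Icc (Real.exp (-(u + v) - 2 * (u + v) ^ 2))
      (Real.exp (-(u + v) + 2 * (u + v) ^ 2)) := by
  have huv : 0 ≤ u * v := mul_nonneg hu.1 hv.1
  constructor
  · calc Real.exp (-(u + v) - 2 * (u + v) ^ 2)
        ≤ Real.exp (-(u + 2 * u ^ 2)) * Real.exp (-(v + 2 * v ^ 2)) := by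
          rw [← Real.exp_add, Real.exp_le_exp]
          linarith
      _ ≤ (1 - u) * (1 - v) := by
          gcongr
          · linarith [hu.2]
          · exact exp_neg_add_two_mul_sq_le_one_sub hu.2
          · exact exp_neg_add_two_mul_sq_le_one_sub hv.2
  · linarith [Real.add_one_le_exp (-(u + v) + 2 * (u + v) ^ 2), sq_nonneg u, sq_nonneg v]

theorem rootFactor_div_add_eq (a p : ℕ) :
    rootFactor a p / p + (if p ∣ a then (p : ℝ)⁻¹ else 0) = (1 + chi4 p) / p := by
  rw [rootFactor]
  split_ifs <;> ring

theorem one_sub_rootFactor_mul_mem_Icc (h : a ∣ n ^ 2 + 1) {p : ℕ} (hp : p.Prime) :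
    (1 - rootFactor a p / p) * (1 - if p ∣ a then (p : ℝ)⁻¹ else 0) ∈
      Set.Icc (Real.exp (-((1 + chi4 p) / p) - 8 * ((p : ℝ) ^ 2)⁻¹))
        (Real.exp (-((1 + chi4 p) / p) + 8 * ((p : ℝ) ^ 2)⁻¹)) := by
  have hp2 : (2 : ℝ) ≤ p := Nat.ofNat_le_cast.2 hp.two_le
  have hpinv : (p : ℝ)⁻¹ ∈ Set.Icc 0 (1 / 2) :=
    ⟨by positivity, by rw [one_div]; exact inv_anti₀ two_pos hp2⟩
  have hite : (if p ∣ a then (p : ℝ)⁻¹ else 0) ∈ Set.Icc (0 : ℝ) (1 / 2) := by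
    split_ifs
    · exact hpinv
    · norm_num
  have hsq : 2 * ((1 + chi4 p) / p) ^ 2 ≤ 8 * ((p : ℝ) ^ 2)⁻¹ := by
    have hchi := abs_le.1 (abs_chi4_le_one p)
    have : (1 + chi4 p) ^ 2 ≤ 2 ^ 2 := pow_le_pow_left₀ (by linarith) (by linarith) 2
    rw [div_pow, div_eq_mul_inv]
    nlinarith [inv_nonneg.2 (sq_nonneg (p : ℝ))]
  have hmem := one_sub_mul_one_sub_mem_Icc (rootFactor_div_mem_Icc h hp) hite
  rw [rootFactor_div_add_eq] at hmem
  refine Set.Icc_subset_Icc ?_ ?_ hmem <;> rw [Real.exp_le_exp] <;> linarith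

theorem prod_one_sub_ite_dvd_eq_totient_div (ha : a ≠ 0) {z : ℝ}
    (hz : ∀ p : ℕ, p.Prime → p ∣ a → (p : ℝ) ≤ z) :
    ∏ p ∈ primesIoc 0 z, (1 - if p ∣ a then (p : ℝ)⁻¹ else 0) = a.totient / a := by
  have hfilter : {p ∈ primesIoc 0 z | p ∣ a} = a.primeFactors := by
    ext p
    rw [mem_filter, mem_primesIoc, Nat.mem_primeFactors]
    exact ⟨fun h ↦ ⟨h.1.1, h.2, ha⟩,
      fun h ↦ ⟨⟨h.1, Nat.cast_pos.2 h.1.pos, hz p h.1 h.2.1⟩, h.2.1⟩⟩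
  have htotient : (a.totient : ℝ) = a * ∏ p ∈ a.primeFactors, (1 - (p : ℝ)⁻¹) := by
    simpa using congrArg (Rat.cast (K := ℝ)) (Nat.totient_eq_mul_prod_factors a)
  rw [htotient, mul_div_cancel_left₀ _ (Nat.cast_ne_zero.2 ha), ← hfilter, prod_filter]
  exact prod_congr rfl fun p _ ↦ by split_ifs <;> simp

theorem exists_prod_one_sub_rootFactor_mem_Icc : ∃ B : ℝ, ∀ a n : ℕ, a ∣ n ^ 2 + 1 →
    ∀ z : ℝ, 2 ≤ z → (∀ p : ℕ, p.Prime → p ∣ a → (p : ℝ) ≤ z) →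
    (∏ p ∈ primesIoc 0 z, (1 - rootFactor a p / p)) * (a.totient / a) ∈
      Set.Icc (Real.exp (-B) / Real.log z) (Real.exp B / Real.log z) := by
  obtain ⟨C, hC⟩ := exists_abs_sum_one_add_chi4_div_sub_log_log_le
  have hsummable : Summable fun n : ℕ ↦ ((n : ℝ) ^ 2)⁻¹ := Real.summable_nat_pow_inv.2 one_lt_two
  refine ⟨C + 8 * ∑' n : ℕ, ((n : ℝ) ^ 2)⁻¹, fun a n h z hz hPa ↦ ?_⟩
  have hprime : ∀ p ∈ primesIoc 0 z, p.Prime := fun p hp ↦ (mem_primesIoc.1 hp).1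
  have hfactor p (hp : p ∈ primesIoc 0 z) := one_sub_rootFactor_mul_mem_Icc h (hprime p hp)
  have hmertens := abs_le.1 (hC z hz)
  have htail : ∑ p ∈ primesIoc 0 z, ((p : ℝ) ^ 2)⁻¹ ≤ ∑' n : ℕ, ((n : ℝ) ^ 2)⁻¹ :=
    hsummable.sum_le_tsum _ fun _ _ ↦ by positivity
  have exp_sub_log_log (t : ℝ) :
      Real.exp t / Real.log z = Real.exp (t - Real.log (Real.log z)) := by
    rw [Real.exp_sub, Real.exp_log (Real.log_pos (by linarith))]
  rw [← prod_one_sub_ite_dvd_eq_totient_div (ne_zero_of_dvd_sq_add_one h) hPa, ← prod_mul_distrib,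
    exp_sub_log_log, exp_sub_log_log]
  constructor
  · refine le_trans ?_ (prod_le_prod (fun p _ ↦ (Real.exp_pos _).le) fun p hp ↦ (hfactor p hp).1)
    rw [← Real.exp_sum, Real.exp_le_exp, sum_sub_distrib, sum_neg_distrib, ← mul_sum]
    linarith
  · refine (prod_le_prod (fun p hp ↦ (Real.exp_pos _).le.trans (hfactor p hp).1)
      fun p hp ↦ (hfactor p hp).2).trans ?_
    rw [← Real.exp_sum, Real.exp_le_exp, sum_add_distrib, sum_neg_distrib, ← mul_sum]
    linarith

end SieveDensity

section FundamentalLemma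

open Finset

variable {t j m : ℕ} {u w z : ℝ} {g : ℕ → ℝ}

theorem pairwiseDisjoint_primesIoc {v : ℕ → ℝ} (hv : Antitone v) (s : Set ℕ) :
    s.PairwiseDisjoint fun j ↦ primesIoc (v (j + 1)) (v j) := fun i _ j _ hij ↦ by
  refine Finset.disjoint_left.2 fun p hpi hpj ↦ ?_
  obtain ⟨-, hpi⟩ := mem_primesIoc.1 hpi
  obtain ⟨-, hpj⟩ := mem_primesIoc.1 hpj
  exact Set.disjoint_left.1 (hv.pairwise_disjoint_on_Ioc_succ hij) hpi hpj

theorem biUnion_primesIoc {v : ℕ → ℝ} (hv : Antitone v) (m : ℕ) :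
    (range m).biUnion (fun j ↦ primesIoc (v (j + 1)) (v j)) = primesIoc (v m) (v 0) := by
  induction m with
  | zero =>
    ext p
    simp [mem_primesIoc]
  | succ m ih =>
    have hm := Set.Ioc_union_Ioc_eq_Ioc (hv m.le_succ) (hv m.zero_le)
    ext p
    simp only [range_add_one, biUnion_insert, ih, mem_union, mem_primesIoc, ← and_or_left]
    exact and_congr_right fun _ ↦ Set.ext_iff.1 hm (p : ℝ)

theorem one_add_two_mul_card_primesIoc_le (hu : 2 ≤ u) (hw : 1 ≤ w) :
    1 + 2 * (#(primesIoc u w) : ℝ) ≤ w := by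
  have hodd : ∀ p ∈ primesIoc u w, p % 2 = 1 := fun p hp ↦ by
    obtain ⟨hprime, hlt, -⟩ := mem_primesIoc.1 hp
    refine hprime.eq_two_or_odd.resolve_left ?_
    rintro rfl
    exact (hu.trans_lt hlt).ne (by norm_num)
  have hcard : #(primesIoc u w) ≤ #(Icc 1 ((⌊w⌋₊ - 1) / 2)) := by
    refine card_le_card_of_injOn (· / 2) (fun p hp ↦ ?_) fun p hp q hq hpq ↦ ?_
    · obtain ⟨hprime, -, hle⟩ := mem_primesIoc.1 hp
      have := Nat.le_floor hle
      have := hprime.two_le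
      have := hodd p hp
      simp only [coe_Icc, Set.mem_Icc]
      omega
    · have := hodd p hp
      have := hodd q hq
      simp only at hpq
      omega
  rw [Nat.card_Icc] at hcard
  have hfloor : 1 ≤ ⌊w⌋₊ := Nat.le_floor (by simpa using hw)
  have hnat : 1 + 2 * #(primesIoc u w) ≤ ⌊w⌋₊ := by omega
  exact (by exact_mod_cast hnat : 1 + 2 * (#(primesIoc u w) : ℝ) ≤ ⌊w⌋₊).trans
    (Nat.floor_le (by linarith))

theorem card_primesIoc_le_floor (u w : ℝ) : #(primesIoc u w) ≤ ⌊w⌋₊ :=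
  (card_filter_le _ _).trans (by simp)

theorem exp_neg_two_mul_sum_le_prod_one_sub {T : Finset ℕ}
    (hg : ∀ p ∈ T, g p ∈ Set.Icc 0 (1 / 2)) :
    Real.exp (-(2 * ∑ p ∈ T, g p)) ≤ ∏ p ∈ T, (1 - g p) := by
  rw [mul_sum, ← sum_neg_distrib, Real.exp_sum]
  refine prod_le_prod (fun p _ ↦ (Real.exp_pos _).le) fun p hp ↦ ?_
  obtain ⟨h0, h2⟩ := hg p hp
  refine le_trans (Real.exp_le_exp.2 ?_) (exp_neg_add_two_mul_sq_le_one_sub h2)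
  nlinarith

theorem five_halves_pow_div_factorial_le (j : ℕ) :
    (5 / 2 : ℝ) ^ (2 * j + 11) / (2 * j + 11).factorial ≤ 1 / 1000 * (1 / 2) ^ j := by
  induction j with
  | zero => norm_num [Nat.factorial]
  | succ j ih =>
    have hratio : (25 / 4 : ℝ) / ((2 * j + 13) * (2 * j + 12)) ≤ 1 / 2 := by
      rw [div_le_div_iff₀ (by positivity) two_pos]
      have : (0 : ℝ) ≤ j := j.cast_nonneg
      nlinarith
    calc (5 / 2 : ℝ) ^ (2 * (j + 1) + 11) / (2 * (j + 1) + 11).factorial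
        = (5 / 2) ^ (2 * j + 11) / (2 * j + 11).factorial *
            (25 / 4 / ((2 * j + 13) * (2 * j + 12))) := by
          rw [show 2 * (j + 1) + 11 = 2 * j + 11 + 1 + 1 by ring, Nat.factorial_succ,
            Nat.factorial_succ, pow_succ, pow_succ, div_mul_div_comm]
          push_cast
          ring
      _ ≤ 1 / 1000 * (1 / 2) ^ j * (1 / 2) := by gcongr
      _ = 1 / 1000 * (1 / 2) ^ (j + 1) := by ring

theorem sieveSum_exactWeight_div_prod_le {T : Finset ℕ} (hg : ∀ p ∈ T, g p ∈ Set.Icc 0 (1 / 2))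
    (hsum : ∑ p ∈ T, g p ≤ 5 / 2) (j : ℕ) :
    sieveSum T (exactWeight (2 * j + 11)) g / ∏ p ∈ T, (1 - g p) ≤ 1 / 4 * (1 / 2) ^ j := by
  have hg0 : ∀ p ∈ T, 0 ≤ g p := fun p hp ↦ (hg p hp).1
  have hsum0 : 0 ≤ ∑ p ∈ T, g p := sum_nonneg hg0
  have hV : (1 / 243 : ℝ) ≤ ∏ p ∈ T, (1 - g p) := by
    refine le_trans ?_ (exp_neg_two_mul_sum_le_prod_one_sub hg)
    calc (1 / 243 : ℝ) = (3 ^ 5)⁻¹ := by norm_num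
      _ ≤ (Real.exp 1 ^ 5)⁻¹ := by gcongr; exact Real.exp_one_lt_three.le
      _ = Real.exp (-5) := by rw [← Real.exp_nat_mul, Real.exp_neg]; norm_num
      _ ≤ Real.exp (-(2 * ∑ p ∈ T, g p)) := Real.exp_le_exp.2 (by linarith)
  have hE : sieveSum T (exactWeight (2 * j + 11)) g ≤ 1 / 1000 * (1 / 2) ^ j :=
    (sieveSum_exactWeight_le hg0 _).trans
      ((by gcongr : _ ≤ _).trans (five_halves_pow_div_factorial_le j))
  calc sieveSum T (exactWeight (2 * j + 11)) g / ∏ p ∈ T, (1 - g p)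
      ≤ 1 / 1000 * (1 / 2) ^ j / (1 / 243) := by gcongr
    _ ≤ 1 / 4 * (1 / 2) ^ j := by linarith [pow_pos (one_half_pos (α := ℝ)) j]

theorem sieveSum_exactWeight_div_prod_primesIoc_le (hu : 16 ≤ u)
    (hg : ∀ p ∈ primesIoc √u u, g p ∈ Set.Icc 0 (2 / (p : ℝ)))
    (hsum : ∑ p ∈ primesIoc √u u, (p : ℝ)⁻¹ ≤ 5 / 4) (j : ℕ) :
    sieveSum (primesIoc √u u) (exactWeight (2 * j + 11)) g / ∏ p ∈ primesIoc √u u, (1 - g p) ≤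
      1 / 4 * (1 / 2) ^ j := by
  have hsqrt : 4 ≤ √u := Real.le_sqrt_of_sq_le (by linarith)
  refine sieveSum_exactWeight_div_prod_le (fun p hp ↦ ⟨(hg p hp).1, (hg p hp).2.trans ?_⟩) ?_ j
  · have hlt := (mem_primesIoc.1 hp).2.1
    rw [div_le_div_iff₀ (by linarith) two_pos]
    linarith
  · calc ∑ p ∈ primesIoc √u u, g p ≤ ∑ p ∈ primesIoc √u u, 2 * (p : ℝ)⁻¹ :=
        sum_le_sum fun p hp ↦ by simpa only [div_eq_mul_inv] using (hg p hp).2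
      _ ≤ 5 / 2 := by rw [← mul_sum]; linarith

theorem rpow_half_pow_succ (hz : 0 ≤ z) (j : ℕ) :
    z ^ ((1 / 2 : ℝ) ^ (j + 1)) = √(z ^ ((1 / 2 : ℝ) ^ j)) := by
  rw [Real.sqrt_eq_rpow, ← Real.rpow_mul hz, pow_succ]

theorem rpow_half_pow_pow_two_pow (hz : 0 ≤ z) (j : ℕ) : (z ^ ((1 / 2 : ℝ) ^ j)) ^ 2 ^ j = z := by
  rw [← Real.rpow_natCast, ← Real.rpow_mul hz]
  push_cast
  rw [← mul_pow]
  norm_num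

theorem exists_rpow_half_pow_le (hw : 2 ≤ w) (hz : 2 ≤ z) :
    ∃ t : ℕ, z ^ ((1 / 2 : ℝ) ^ t) ≤ w ∧ (∀ j < t, w < z ^ ((1 / 2 : ℝ) ^ j)) ∧
      (t : ℝ) + 1 ≤ z := by
  have two_pow_lt {n : ℕ} (hn : w < z ^ ((1 / 2 : ℝ) ^ n)) : (2 : ℝ) ^ 2 ^ n < z := by
    calc (2 : ℝ) ^ 2 ^ n < (z ^ ((1 / 2 : ℝ) ^ n)) ^ 2 ^ n := by gcongr; linarith
      _ = z := rpow_half_pow_pow_two_pow (by linarith) n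
  have hex : ∃ t : ℕ, z ^ ((1 / 2 : ℝ) ^ t) ≤ w := by
    obtain ⟨n, hn⟩ := pow_unbounded_of_one_lt z one_lt_two
    refine ⟨n, not_lt.1 fun hlt ↦ ?_⟩
    have := pow_le_pow_right₀ (one_le_two (α := ℝ)) n.lt_two_pow_self.le
    linarith [two_pow_lt hlt]
  have hmin : ∀ j < Nat.find hex, w < z ^ ((1 / 2 : ℝ) ^ j) := fun j hj ↦
    not_le.1 (Nat.find_min hex hj)
  refine ⟨Nat.find hex, Nat.find_spec hex, hmin, ?_⟩
  cases hs : Nat.find hex with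
  | zero =>
    push_cast
    linarith
  | succ s =>
    have hexp : s + 1 + 1 ≤ 2 ^ 2 ^ s :=
      (Nat.lt_two_pow_self (n := s + 1)).trans_le (Nat.pow_le_pow_right two_pos Nat.lt_two_pow_self)
    calc ((s + 1 : ℕ) : ℝ) + 1 ≤ 2 ^ 2 ^ s := by exact_mod_cast hexp
      _ ≤ z := (two_pow_lt (hmin s (by omega))).le

/-- The endpoints of the sieving blocks: starting from `z`, take square roots `t` times; the next
endpoint is `0`, so that the last block contains all the small primes. -/
noncomputable def blockEnd (z : ℝ) (t j : ℕ) : ℝ := if j ≤ t then z ^ ((1 / 2 : ℝ) ^ j) else 0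

theorem antitone_blockEnd (hz : 1 ≤ z) (t : ℕ) : Antitone (blockEnd z t) := fun i j hij ↦ by
  unfold blockEnd
  split_ifs with hj hi
  · exact Real.rpow_le_rpow_of_exponent_le hz
      (pow_le_pow_of_le_one (by norm_num) (by norm_num) hij)
  · omega
  · positivity
  · rfl

/-- The `j`-th block of primes of the Brun–Hooley sieve, for `j ≤ t`. -/
noncomputable def sieveBlock (z : ℝ) (t j : ℕ) : Finset ℕ :=
  primesIoc (blockEnd z t (j + 1)) (blockEnd z t j)

theorem biUnion_sieveBlock (hz : 1 ≤ z) (t : ℕ) :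
    (range (t + 1)).biUnion (sieveBlock z t) = primesIoc 0 z := by
  have h := biUnion_primesIoc (antitone_blockEnd hz t) (t + 1)
  rwa [blockEnd, if_neg (by omega), blockEnd, if_pos t.zero_le, pow_zero, Real.rpow_one] at h

theorem sieveBlock_of_lt (hz : 0 ≤ z) (hj : j < t) :
    sieveBlock z t j = primesIoc √(z ^ ((1 / 2 : ℝ) ^ j)) (z ^ ((1 / 2 : ℝ) ^ j)) := by
  rw [sieveBlock, blockEnd, blockEnd, if_pos (Nat.succ_le_of_lt hj), if_pos hj.le,
    rpow_half_pow_succ hz]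

theorem sieveBlock_self (z : ℝ) (t : ℕ) :
    sieveBlock z t t = primesIoc 0 (z ^ ((1 / 2 : ℝ) ^ t)) := by
  simp [sieveBlock, blockEnd]

/-- The truncation levels of the Brun–Hooley sieve. When the last block has at most `m` primes,
the level `2 * m` means no truncation there. The other levels grow fast enough for the losses to
add up to at most `1 / 2`, and slowly enough for `∑ j, (2 * j + 11) / 2 ^ j`, the exponent of `z` in
the level of distribution, to stay below `26`. -/
def blockLevel (m t j : ℕ) : ℕ := if j = t then 2 * m else 2 * j + 10

theorem even_blockLevel (m t j : ℕ) : Even (blockLevel m t j) := by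
  unfold blockLevel
  split_ifs
  · exact even_two_mul m
  · exact ⟨j + 5, by ring⟩

theorem brunHooleyLoss_sieveBlock_le (hz : 1 ≤ z)
    (hu : ∀ j < t, 16 ≤ z ^ ((1 / 2 : ℝ) ^ j)) (hlast : #(sieveBlock z t t) ≤ m)
    (hsum : ∀ j < t, ∑ p ∈ sieveBlock z t j, (p : ℝ)⁻¹ ≤ 5 / 4)
    (hg : ∀ p ∈ primesIoc 0 z, g p ∈ Set.Icc 0 (2 / (p : ℝ))) :
    brunHooleyLoss (range (t + 1)) (sieveBlock z t) (blockLevel m t) g ≤ 1 / 2 := by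
  rw [← biUnion_sieveBlock hz t] at hg
  have last_eq_zero : sieveSum (sieveBlock z t t) (exactWeight (blockLevel m t t + 1)) g = 0 :=
    sieveSum_exactWeight_eq_zero (by rw [blockLevel, if_pos rfl]; omega) g
  rw [brunHooleyLoss, sum_range_succ, last_eq_zero, zero_div, add_zero]
  calc ∑ j ∈ range t, sieveSum (sieveBlock z t j) (exactWeight (blockLevel m t j + 1)) g /
          ∏ p ∈ sieveBlock z t j, (1 - g p)
      ≤ ∑ j ∈ range t, 1 / 4 * (1 / 2 : ℝ) ^ j := sum_le_sum fun j hj ↦ by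
        have hjt := mem_range.1 hj
        have hgj : ∀ p ∈ sieveBlock z t j, g p ∈ Set.Icc 0 (2 / (p : ℝ)) := fun p hp ↦
          hg p (mem_biUnion.2 ⟨j, mem_range.2 (by omega), hp⟩)
        have hsumj := hsum j hjt
        rw [blockLevel, if_neg hjt.ne]
        rw [sieveBlock_of_lt (by linarith) hjt] at hgj hsumj ⊢
        exact sieveSum_exactWeight_div_prod_primesIoc_le (hu j hjt) hgj hsumj j
    _ ≤ 1 / 2 := by
        rw [← mul_sum]
        linarith [sum_geometric_two_le t]

theorem sum_two_mul_add_eleven_mul_half_pow (t : ℕ) :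
    ∑ j ∈ range t, (2 * (j : ℝ) + 11) * (1 / 2) ^ j = 26 - (4 * t + 26) * (1 / 2) ^ t := by
  induction t with
  | zero => simp
  | succ t ih =>
    rw [sum_range_succ, ih]
    push_cast
    ring

theorem prod_one_add_two_mul_card_sieveBlock_pow_le (hz : 1 ≤ z)
    (hu : ∀ j < t, 4 ≤ z ^ ((1 / 2 : ℝ) ^ j)) (hlast : #(sieveBlock z t t) ≤ m) :
    ∏ j ∈ range (t + 1), (1 + 2 * (#(sieveBlock z t j) : ℝ)) ^ (blockLevel m t j + 1) ≤
      z ^ 26 * (1 + 2 * m) ^ (2 * m + 1) := by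
  have hmain : ∏ j ∈ range t, (1 + 2 * (#(sieveBlock z t j) : ℝ)) ^ (blockLevel m t j + 1) ≤
      z ^ 26 :=
    calc _ ≤ ∏ j ∈ range t, z ^ ((2 * (j : ℝ) + 11) * (1 / 2) ^ j) :=
          prod_le_prod (fun j _ ↦ by positivity) fun j hj ↦ by
            have hjt := mem_range.1 hj
            have hsqrt : 2 ≤ √(z ^ ((1 / 2 : ℝ) ^ j)) :=
              Real.le_sqrt_of_sq_le (by linarith [hu j hjt])
            have hcard := one_add_two_mul_card_primesIoc_le hsqrt
              ((by norm_num : (1 : ℝ) ≤ 4).trans (hu j hjt))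
            rw [sieveBlock_of_lt (by linarith) hjt, blockLevel, if_neg hjt.ne, mul_comm _ (_ ^ j),
              Real.rpow_mul (by linarith)]
            exact_mod_cast pow_le_pow_left₀ (by positivity) hcard (2 * j + 11)
      _ = z ^ (26 - (4 * (t : ℝ) + 26) * (1 / 2) ^ t) := by
          rw [← Real.rpow_sum_of_pos (by linarith), sum_two_mul_add_eleven_mul_half_pow]
      _ ≤ z ^ (26 : ℝ) := Real.rpow_le_rpow_of_exponent_le hz (sub_le_self _ (by positivity))
      _ = z ^ 26 := by exact_mod_cast Real.rpow_natCast z 26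
  rw [prod_range_succ]
  gcongr
  rw [blockLevel, if_pos rfl]
  gcongr

theorem exists_sum_prod_one_sub_mem_Icc : ∃ K : ℝ, 0 ≤ K ∧ ∀ {α : Type*} {N : Finset α}
    {b : α → ℕ → ℝ} {g : ℕ → ℝ} {X R z : ℝ}, 2 ≤ z → HasSieveDensity N b (primesIoc 0 z) g X R 2 →
    (∀ p ∈ primesIoc 0 z, g p ≤ 2 / p) →
    ∑ n ∈ N, ∏ p ∈ primesIoc 0 z, (1 - b n p) ∈
      Set.Icc (X * (∏ p ∈ primesIoc 0 z, (1 - g p)) / 2 - R * (K * z ^ 27))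
        (2 * (X * ∏ p ∈ primesIoc 0 z, (1 - g p)) + R * (K * z ^ 27)) := by
  obtain ⟨w, hw⟩ := Filter.eventually_atTop.1
    (eventually_sum_inv_primesIoc_sqrt_le.and (Filter.eventually_ge_atTop 16))
  have hw16 : 16 ≤ w := (hw w le_rfl).2
  set m := ⌊w⌋₊
  refine ⟨2 * (1 + 2 * m) ^ (2 * m + 1), by positivity, fun {α N b g X R z} hz h hg ↦ ?_⟩
  have hz1 : 1 ≤ z := by linarith
  obtain ⟨t, ht, htw, htz⟩ := exists_rpow_half_pow_le (by linarith : 2 ≤ w) hz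
  have hu : ∀ j < t, 16 ≤ z ^ ((1 / 2 : ℝ) ^ j) := fun j hj ↦ hw16.trans (htw j hj).le
  have hlast : #(sieveBlock z t t) ≤ m := by
    rw [sieveBlock_self]
    exact (card_primesIoc_le_floor _ _).trans (Nat.floor_le_floor ht)
  have hloss : brunHooleyLoss (range (t + 1)) (sieveBlock z t) (blockLevel m t) g ≤ 1 / 2 := by
    refine brunHooleyLoss_sieveBlock_le hz1 hu hlast (fun j hj ↦ ?_) fun p hp ↦
      ⟨(h.density_mem p hp).1, hg p hp⟩
    rw [sieveBlock_of_lt (by linarith) hj]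
    exact (hw _ (htw j hj).le).1
  have hcard : ((#(range (t + 1)) : ℝ) + 1) *
      ∏ j ∈ range (t + 1), (1 + 2 * (#(sieveBlock z t j) : ℝ)) ^ (blockLevel m t j + 1) ≤
        2 * (1 + 2 * m) ^ (2 * m + 1) * z ^ 27 := by
    calc _ ≤ 2 * z * (z ^ 26 * (1 + 2 * m) ^ (2 * m + 1)) := by
          gcongr
          · rw [card_range]
            push_cast
            linarith
          · exact prod_one_add_two_mul_card_sieveBlock_pow_le hz1
              (fun j hj ↦ by linarith [hu j hj]) hlast
      _ = _ := by ring
  rw [← biUnion_sieveBlock hz1 t] at h ⊢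
  exact h.sum_prod_one_sub_mem_Icc (pairwiseDisjoint_primesIoc (antitone_blockEnd hz1 t) _)
    (even_blockLevel m t) hloss hcard

end FundamentalLemma

section Asymptotics

open Finset

variable {a n : ℕ} {x z : ℝ}

theorem card_sifted_eq_sum_prod (a : ℕ) (x z : ℝ) :
    (#{n ∈ Icc 1 ⌊x⌋₊ | a ∣ n ^ 2 + 1 ∧ ∀ p : ℕ, p.Prime → p ∣ (n ^ 2 + 1) / a → (p : ℝ) > z} :
      ℝ) = ∑ n ∈ Icc 1 ⌊x⌋₊ with a ∣ n ^ 2 + 1,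
        ∏ p ∈ primesIoc 0 z, (1 - if p ∣ (n ^ 2 + 1) / a then (1 : ℝ) else 0) := by
  rw [← filter_filter, ← sum_boole]
  refine sum_congr rfl fun n _ ↦ ?_
  have one_sub_ite (p : ℕ) : (1 - if p ∣ (n ^ 2 + 1) / a then (1 : ℝ) else 0) =
      if ¬ p ∣ (n ^ 2 + 1) / a then 1 else 0 := by split_ifs <;> norm_num
  simp only [one_sub_ite, prod_ite_zero, prod_const_one]
  refine if_congr ⟨fun h p hp hdvd ↦ ?_, fun h p hp hdvd ↦ ?_⟩ rfl rfl
  · obtain ⟨hprime, -, hle⟩ := mem_primesIoc.1 hp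
    exact (h p hprime hdvd).not_ge hle
  · exact not_le.1 fun hle ↦ h p (mem_primesIoc.2 ⟨hp, Nat.cast_pos.2 hp.pos, hle⟩) hdvd

theorem rootCount_mul_prod_mem_Icc (h : a ∣ n ^ 2 + 1) (hx : 0 ≤ x) {V L c₁ c₂ : ℝ}
    (hV : V * (a.totient / a) ∈ Set.Icc (c₁ / L) (c₂ / L)) :
    x * (rootCount a / a) * V ∈ Set.Icc (c₁ * (rootCount a * x / (a.totient * L)))
      (c₂ * (rootCount a * x / (a.totient * L))) := by
  have ha := Nat.pos_of_ne_zero (ne_zero_of_dvd_sq_add_one h)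
  have : (0 : ℝ) < a := Nat.cast_pos.2 ha
  have : (0 : ℝ) < a.totient := Nat.cast_pos.2 (Nat.totient_pos.2 ha)
  have main_eq : x * (rootCount a / a) * V =
      rootCount a * x / a.totient * (V * (a.totient / a)) := by field_simp
  have bound_eq (c : ℝ) : c * (rootCount a * x / (a.totient * L)) =
      rootCount a * x / a.totient * (c / L) := by rw [div_mul_div_comm]; ring
  rw [main_eq, bound_eq, bound_eq]
  exact ⟨mul_le_mul_of_nonneg_left hV.1 (by positivity),
    mul_le_mul_of_nonneg_left hV.2 (by positivity)⟩

theorem sieve_error_le (h : a ∣ n ^ 2 + 1) {c K : ℝ} (hK : 0 ≤ K) (hz : 2 ≤ z)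
    (hx : K * a * z ^ 28 ≤ c * x) :
    rootCount a * (K * z ^ 27) ≤ c * (rootCount a * x / (a.totient * Real.log z)) := by
  have ha := Nat.pos_of_ne_zero (ne_zero_of_dvd_sq_add_one h)
  have : (0 : ℝ) < a.totient := Nat.cast_pos.2 (Nat.totient_pos.2 ha)
  have hφa : (a.totient : ℝ) ≤ a := Nat.cast_le.2 (Nat.totient_le a)
  have hlog : 0 < Real.log z := Real.log_pos (by linarith)
  have hlogz : Real.log z ≤ z := by linarith [Real.log_le_sub_one_of_pos (by linarith : 0 < z)]
  rw [show c * (rootCount a * x / (a.totient * Real.log z)) =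
    rootCount a * (c * x / (a.totient * Real.log z)) by ring]
  refine mul_le_mul_of_nonneg_left ?_ (Nat.cast_nonneg (α := ℝ) _)
  rw [le_div_iff₀ (by positivity)]
  calc K * z ^ 27 * (a.totient * Real.log z) ≤ K * z ^ 27 * (a * z) := by gcongr
    _ = K * a * z ^ 28 := by ring
    _ ≤ c * x := hx

theorem lemma_W_asymp_general :
    ∃ c : ℝ, 0 < c ∧ ∃ C : ℝ, 0 < C ∧ ∃ K : ℝ, ∀ x : ℝ, ∀ a : ℕ, ∀ z : ℝ, 2 ≤ z →
      K * a * z ^ 28 ≤ x → (∃ n : ℕ, a ∣ n ^ 2 + 1) →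
      (∀ p : ℕ, p.Prime → p ∣ a → (p : ℝ) ≤ z) →
      c * (2 ^ #a.primeFactors * x / (a.totient * Real.log z)) ≤
        (#{n ∈ Icc 1 ⌊x⌋₊ | a ∣ n ^ 2 + 1 ∧
          ∀ p : ℕ, p.Prime → p ∣ (n ^ 2 + 1) / a → (p : ℝ) > z} : ℝ) ∧
      (#{n ∈ Icc 1 ⌊x⌋₊ | a ∣ n ^ 2 + 1 ∧
          ∀ p : ℕ, p.Prime → p ∣ (n ^ 2 + 1) / a → (p : ℝ) > z} : ℝ) ≤
        C * (2 ^ #a.primeFactors * x / (a.totient * Real.log z)) := by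
  obtain ⟨B, hB⟩ := exists_prod_one_sub_rootFactor_mem_Icc
  obtain ⟨K, hK, sieve⟩ := exists_sum_prod_one_sub_mem_Icc
  refine ⟨Real.exp (-B) / 8, by positivity, 2 * Real.exp B + Real.exp (-B), by positivity,
    8 * K * Real.exp B, fun x a z hz hx ⟨n, h⟩ hPa ↦ ?_⟩
  have hx0 : 0 ≤ x := le_trans (by positivity) hx
  have hx' : 2 * K * a * z ^ 28 ≤ Real.exp (-B) / 4 * x := by
    rw [Real.exp_neg]
    field_simp
    linarith
  have hlog : 0 < Real.log z := Real.log_pos (by linarith)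
  have hmem := sieve hz (hasSieveDensity_sq_add_one h hx0 fun p hp ↦ (mem_primesIoc.1 hp).1)
    fun p hp ↦ by gcongr; exact (rootFactor_mem_Icc h (mem_primesIoc.1 hp).1).2
  have hmain := rootCount_mul_prod_mem_Icc h hx0 (hB a n h z hz hPa)
  have herror := sieve_error_le h (by positivity) hz hx'
  rw [card_sifted_eq_sum_prod]
  set Q := rootCount a * x / (a.totient * Real.log z)
  set M := 2 ^ #a.primeFactors * x / (a.totient * Real.log z)
  have hQM : Q ≤ M := by
    unfold Q M
    gcongr
    exact_mod_cast rootCount_le_two_pow h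
  have hMQ : M ≤ 2 * Q := by
    unfold Q M
    rw [← mul_div_assoc, ← mul_assoc]
    gcongr
    exact_mod_cast two_pow_le_two_mul_rootCount h
  constructor
  · nlinarith [hmem.1, hmain.1, Real.exp_pos (-B)]
  · nlinarith [hmem.2, hmain.2, Real.exp_pos (-B), Real.exp_pos B]

theorem exists_mul_mul_pow_le_of_le_rpow (K : ℝ) : ∃ x₀ : ℝ, ∀ x ≥ x₀, ∀ a : ℝ, 0 ≤ a →
    a ≤ x ^ ((1 : ℝ) / 30) → ∀ z : ℝ, 0 ≤ z → z ≤ x ^ ((1 : ℝ) / 30) → K * a * z ^ 28 ≤ x := by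
  refine ⟨max K 0 ^ 30, fun x hx a ha hax z hz hzx ↦ ?_⟩
  have hx0 : 0 ≤ x := le_trans (by positivity) hx
  have hpow : (x ^ ((1 : ℝ) / 30)) ^ 30 = x := by
    rw [← Real.rpow_natCast, ← Real.rpow_mul hx0]
    norm_num
  set y := x ^ ((1 : ℝ) / 30)
  have hy : 0 ≤ y := by positivity
  have hK : K ≤ y := (le_max_left K 0).trans
    (le_of_pow_le_pow_left₀ (by norm_num) hy (hx.trans_eq hpow.symm))
  calc K * a * z ^ 28 ≤ y * y * y ^ 28 := by gcongr
    _ = x := by rw [← hpow]; ring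

end Asymptotics

/-- **Lemma 3.3.** There exist `c, C > 0` such that for all sufficiently large `x`,
all integers `2 ≤ a ≤ x^(1/30)` with `a ∈ 𝓜` (i.e. `a` divides `n²+1` for some `n ≥ 1`)
and `P⁺(a) ≤ z`, and all reals `2 ≤ z ≤ x^(1/30)`, setting
`W_a(x,z) = #{n ≤ x : a ∣ n²+1 and P⁻((n²+1)/a) > z}`, one has
`c · 2^ω(a)·x/(φ(a)·log z) ≤ W_a(x,z) ≤ C · 2^ω(a)·x/(φ(a)·log z)`. -/
theorem lemma_W_asymp :
    ∃ c : ℝ, 0 < c ∧ ∃ C : ℝ, 0 < C ∧ ∃ x₀ : ℝ, ∀ x : ℝ, x ≥ x₀ →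
      ∀ a : ℕ, 2 ≤ a → (a : ℝ) ≤ x ^ ((1 : ℝ) / 30) →
      ∀ z : ℝ, 2 ≤ z → z ≤ x ^ ((1 : ℝ) / 30) →
      (∃ n : ℕ, 1 ≤ n ∧ a ∣ n ^ 2 + 1) →
      (∀ p : ℕ, p.Prime → p ∣ a → (p : ℝ) ≤ z) →
      c * (2 ^ a.primeFactors.card * x / (a.totient * Real.log z)) ≤
        (((Finset.Icc 1 ⌊x⌋₊).filter
            (fun n => a ∣ n ^ 2 + 1 ∧
              ∀ p : ℕ, p.Prime → p ∣ (n ^ 2 + 1) / a → (p : ℝ) > z)).card : ℝ) ∧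
      (((Finset.Icc 1 ⌊x⌋₊).filter
            (fun n => a ∣ n ^ 2 + 1 ∧
              ∀ p : ℕ, p.Prime → p ∣ (n ^ 2 + 1) / a → (p : ℝ) > z)).card : ℝ) ≤
        C * (2 ^ a.primeFactors.card * x / (a.totient * Real.log z)) := by
  obtain ⟨c, hc, C, hC, K, bounds⟩ := lemma_W_asymp_general
  obtain ⟨x₀, hx₀⟩ := exists_mul_mul_pow_le_of_le_rpow K
  exact ⟨c, hc, C, hC, x₀, fun x hx a _ hax z hz hzx ⟨n, _, hn⟩ hPa ↦ bounds x a z hz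
    (hx₀ x hx a a.cast_nonneg hax z (by linarith) hzx) ⟨n, hn⟩ hPa⟩
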